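/- Suppose that for every triple (H,h,χ) satisfying condition (*), the order of hZ(H) in H/Z(H) divides |H : Z(H)|/χ(1) (equivalently, o(hZ(H))·χ(1) divides |H : Z(H)|). Then Wilde's conjecture holds: for every finite group G, every irreducible complex character χ of G, and every g ∈ G with χ(g) ≠ 0, the order o(g) of g divides |G|/χ(1) (equivalently, o(g)·χ(1) divides |G|). -/

import Mathlib

/-- A group `L` is quasi-simple if it is perfect and `L/Z(L)` is simple. -/
def IsQuasisimple (L : Type*) [Group L] : Prop :=
  commutator L = ⊤ ∧ IsSimpleGroup (L ⧸ Subgroup.center L)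

/-- A triple `(H, h, χ)` (with `χ` afforded by the representation `V`) satisfies
condition `(*)`: `H` is a finite group, `h ∈ H`, the derived subgroup `L = [H,H]` is
quasi-simple, `Z(L) = Z(H)` is cyclic, `H = ⟨L, h⟩`, and `χ ∈ Irr(H)` is faithful. -/
def SatisfiesStar (H : Type) [Group H] [Finite H] (h : H) (V : FDRep ℂ H) : Prop :=
  CategoryTheory.Simple V ∧ Function.Injective V.ρ ∧
    IsQuasisimple ↥(commutator H) ∧
    Subgroup.map (commutator H).subtype (Subgroup.center ↥(commutator H)) =
      Subgroup.center H ∧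
    IsCyclic ↥(Subgroup.center H) ∧
    commutator H ⊔ Subgroup.zpowers h = ⊤

section
open Module

/-- Two endomorphisms are proportional. -/
def Pro {V : Type} [AddCommGroup V] [Module ℂ V] (A B : Module.End ℂ V) : Prop :=
  ∃ c : ℂ, c ≠ 0 ∧ A = c • B

section Pro
variable {V : Type} [AddCommGroup V] [Module ℂ V] {A B C D : Module.End ℂ V}

theorem Pro.refl (A : Module.End ℂ V) : Pro A A := ⟨1, one_ne_zero, by simp⟩

theorem Pro.symm (h : Pro A B) : Pro B A := by
  obtain ⟨c, hc, rfl⟩ := h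
  exact ⟨c⁻¹, inv_ne_zero hc, by rw [smul_smul, inv_mul_cancel₀ hc, one_smul]⟩

theorem Pro.trans (h : Pro A B) (h' : Pro B C) : Pro A C := by
  obtain ⟨c, hc, rfl⟩ := h
  obtain ⟨d, hd, rfl⟩ := h'
  exact ⟨c * d, mul_ne_zero hc hd, by rw [smul_smul]⟩

theorem Pro.mul (h : Pro A B) (h' : Pro C D) : Pro (A * C) (B * D) := by
  obtain ⟨c, hc, rfl⟩ := h
  obtain ⟨d, hd, rfl⟩ := h'
  exact ⟨c * d, mul_ne_zero hc hd, by rw [smul_mul_smul_comm]⟩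

theorem Pro.trace_ne (h : Pro A B) (hA : LinearMap.trace ℂ V A ≠ 0) :
    LinearMap.trace ℂ V B ≠ 0 := by
  obtain ⟨c, hc, rfl⟩ := h
  intro h0
  apply hA
  rw [map_smul, h0, smul_zero]

theorem Pro.mem (h : Pro A B) {W : Submodule ℂ V} {w : V} (hw : B w ∈ W) : A w ∈ W := by
  obtain ⟨c, hc, rfl⟩ := h
  exact W.smul_mem c hw

theorem Pro.map_eq (h : Pro A B) (W : Submodule ℂ V) : W.map A = W.map B := by
  obtain ⟨c, hc, rfl⟩ := h
  exact Submodule.map_smul _ _ c hc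

end Pro

/-- Projective representation (up to scalars). -/
def PR {G V : Type} [Group G] [AddCommGroup V] [Module ℂ V] (T : G → Module.End ℂ V) : Prop :=
  (∀ g, IsUnit (T g)) ∧ ∀ g h, Pro (T (g * h)) (T g * T h)

/-- Irreducibility of a family of operators. -/
def Irr {ι V : Type} [AddCommGroup V] [Module ℂ V] (T : ι → Module.End ℂ V) : Prop :=
  Nontrivial V ∧ ∀ W : Submodule ℂ V, (∀ i, ∀ w ∈ W, T i w ∈ W) → W = ⊥ ∨ W = ⊤

section PRb
variable {G V : Type} [Group G] [AddCommGroup V] [Module ℂ V] {T : G → Module.End ℂ V}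

theorem PR.one (h : PR T) : Pro (T 1) 1 := by
  obtain ⟨c, hc, h1⟩ := h.2 1 1
  rw [mul_one] at h1
  refine ⟨c⁻¹, inv_ne_zero hc, ?_⟩
  apply (h.1 1).mul_left_cancel
  rw [mul_smul_comm, mul_one]
  rw [eq_inv_smul_iff₀ hc, ← h1]

theorem PR.inv (h : PR T) (g : G) : Pro (T g * T g⁻¹) 1 := by
  have := h.2 g g⁻¹
  rw [mul_inv_cancel] at this
  exact this.symm.trans h.one

theorem PR.inv' (h : PR T) (g : G) : Pro (T g⁻¹ * T g) 1 := by
  have := h.2 g⁻¹ g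
  rw [inv_mul_cancel] at this
  exact this.symm.trans h.one

theorem PR.pow (h : PR T) (g : G) (n : ℕ) : Pro (T (g ^ n)) (T g ^ n) := by
  induction n with
  | zero => simpa using h.one
  | succ n ih => rw [pow_succ, pow_succ]; exact (h.2 _ _).trans (ih.mul (Pro.refl _))

theorem PR.conj (h : PR T) (g n : G) : Pro (T g * T n) (T (g * n * g⁻¹) * T g) := by
  have := h.2 (g * n * g⁻¹) g
  rw [inv_mul_cancel_right] at this
  exact (h.2 _ _).symm.trans this

theorem PR.comp {H : Type} [Group H] (h : PR T) (f : H →* G) : PR (fun x => T (f x)) :=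
  ⟨fun x => h.1 _, fun x y => by simp only [map_mul]; exact h.2 _ _⟩

theorem PR.sub (h : PR T) (H : Subgroup G) : PR (fun x : H => T x) := h.comp H.subtype

theorem PR.inj (h : PR T) (g : G) : Function.Injective (T g) := by
  have := (Module.End.isUnit_iff _).1 (h.1 g)
  exact this.1

theorem PR.surj (h : PR T) (g : G) : Function.Surjective (T g) := by
  have := (Module.End.isUnit_iff _).1 (h.1 g)
  exact this.2

theorem PR.map_map (h : PR T) (g g' : G) (W : Submodule ℂ V) :
    (W.map (T g')).map (T g) = W.map (T (g * g')) := by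
  rw [(h.2 g g').map_eq, Module.End.mul_eq_comp, Submodule.map_comp]

theorem PR.map_one (h : PR T) (W : Submodule ℂ V) : W.map (T 1) = W := by
  rw [h.one.map_eq, Module.End.one_eq_id, Submodule.map_id]

theorem Irr.mono {ι κ : Type} {T : ι → Module.End ℂ V} {S : κ → Module.End ℂ V} (h : Irr T)
    (hTS : ∀ i, ∃ j, Pro (T i) (S j)) : Irr S := by
  refine ⟨h.1, fun W hW => h.2 W fun i w hw => ?_⟩
  obtain ⟨j, hj⟩ := hTS i
  exact hj.mem (hW j w hw)

/-- Schur's lemma. -/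
theorem Irr.schur {ι : Type} {T : ι → Module.End ℂ V} [FiniteDimensional ℂ V] (h : Irr T)
    (f : Module.End ℂ V) (hf : ∀ i, f * T i = T i * f) : ∃ c : ℂ, f = c • 1 := by
  have := h.1
  obtain ⟨c, hc⟩ := Module.End.exists_eigenvalue f
  refine ⟨c, ?_⟩
  rcases h.2 (Module.End.eigenspace f c) (fun i w hw => by
    rw [Module.End.mem_eigenspace_iff] at hw ⊢
    have := LinearMap.congr_fun (hf i) w
    simp only [Module.End.mul_apply] at this
    rw [this, hw, map_smul]) with h0 | h0
  · exact absurd h0 hc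
  · ext v
    have : v ∈ Module.End.eigenspace f c := h0 ▸ Submodule.mem_top
    rw [Module.End.mem_eigenspace_iff] at this
    simpa using this

/-- Schur for two proportional-intertwining units. -/
theorem Irr.schur' {ι : Type} {T : ι → Module.End ℂ V} [FiniteDimensional ℂ V] (h : Irr T)
    (f g : Module.End ℂ V) (hg : IsUnit g) (hf : IsUnit f) (S : ι → Module.End ℂ V)
    (h1 : ∀ i, f * T i = S i * f) (h2 : ∀ i, g * T i = S i * g) : Pro f g := by
  obtain ⟨u, rfl⟩ := hg
  have := h.1
  obtain ⟨c, hc⟩ := h.schur (↑u⁻¹ * f) (fun i => by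
    rw [mul_assoc, h1, ← mul_assoc, ← mul_assoc]
    congr 1
    have := h2 i
    calc _ = ↑u⁻¹ * (S i * ↑u) * ↑u⁻¹ := by simp [mul_assoc]
      _ = _ := by rw [← this]; simp [← mul_assoc])
  have hfu : f = c • (u : Module.End ℂ V) := by
    have : f = ↑u * (↑u⁻¹ * f) := by simp
    rw [this, hc]; simp
  refine ⟨c, ?_, hfu⟩
  rintro rfl
  rw [zero_smul] at hfu
  subst hfu
  exact not_isUnit_zero hf

theorem Irr.of_linearEquiv {ι V' : Type} [AddCommGroup V'] [Module ℂ V']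
    {T : ι → Module.End ℂ V} {T' : ι → Module.End ℂ V'} (h : Irr T) (e : V ≃ₗ[ℂ] V')
    (he : ∀ i v, e (T i v) = T' i (e v)) : Irr T' := by
  have := h.1
  refine ⟨e.symm.toEquiv.nontrivial, fun W hW => ?_⟩
  rcases h.2 (W.comap e.toLinearMap) (fun i w hw => by
    simp only [Submodule.mem_comap, LinearEquiv.coe_coe] at hw ⊢
    rw [he]; exact hW i _ hw) with h0 | h0
  · left
    rw [eq_bot_iff]
    intro w hw
    have : e.symm w ∈ W.comap e.toLinearMap := by simpa using hw
    rw [h0] at this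
    simpa using this
  · right
    rw [eq_top_iff]
    intro w _
    have : e.symm w ∈ W.comap e.toLinearMap := h0 ▸ Submodule.mem_top
    simpa using this

end PRb

/-- The quotient of a projective representation by a subgroup acting by scalars. -/
theorem PR.quot {G V : Type} [Group G] [AddCommGroup V] [Module ℂ V] {T : G → Module.End ℂ V}
    (h : PR T) (hI : Irr T) (K : Subgroup G) [K.Normal] (hK : ∀ k ∈ K, Pro (T k) 1) :
    ∃ S : G ⧸ K → Module.End ℂ V, PR S ∧ Irr S ∧ ∀ g : G, Pro (S g) (T g) := by
  have key : ∀ g : G, Pro (T (Quotient.out (g : G ⧸ K))) (T g) := by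
    intro g
    obtain ⟨k, hk⟩ := QuotientGroup.mk_out_eq_mul K g
    have : Pro (T (g * k)) (T g * 1) := (h.2 g k).trans ((Pro.refl _).mul (hK k k.2))
    rw [mul_one] at this
    rw [hk]
    exact this
  refine ⟨fun q => T (Quotient.out q), ⟨fun q => h.1 _, ?_⟩, ?_, key⟩
  · intro a b
    induction a using QuotientGroup.induction_on with | _ a =>
    induction b using QuotientGroup.induction_on with | _ b =>
    rw [← QuotientGroup.mk_mul]
    exact (key _).trans ((h.2 a b).trans ((key a).symm.mul (key b).symm))
  · exact hI.mono fun g => ⟨(g : G ⧸ K), (key g).symm⟩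

end

section
open Module

theorem trace_block {ι V : Type} [AddCommGroup V] [Module ℂ V] [FiniteDimensional ℂ V]
    [Fintype ι] [DecidableEq ι]
    {N : ι → Submodule ℂ V} (h : DirectSum.IsInternal N) (f : Module.End ℂ V) (σ : ι → ι)
    (hf : ∀ i, Set.MapsTo f (N i) (N (σ i))) (ht : LinearMap.trace ℂ V f ≠ 0) :
    ∃ i, σ i = i ∧ ∀ hm : Set.MapsTo f (N i) (N i),
      LinearMap.trace ℂ (N i) (f.restrict hm) ≠ 0 := by
  classical
  by_contra hcon
  push Not at hcon
  apply ht
  let b : (i : ι) → Basis _ ℂ (N i) := fun i ↦ Module.Free.chooseBasis ℂ (N i)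
  rw [LinearMap.trace_eq_matrix_trace ℂ (h.collectedBasis b), Matrix.trace, Fintype.sum_sigma]
  apply Finset.sum_eq_zero
  intro i _
  by_cases hi : σ i = i
  · obtain ⟨hm, h0⟩ := hcon i hi
    rw [LinearMap.trace_eq_matrix_trace ℂ (b i), Matrix.trace] at h0
    rw [← h0]
    apply Finset.sum_congr rfl
    intro k _
    simp only [Matrix.diag_apply, LinearMap.toMatrix_apply]
    simp [h.collectedBasis_repr_of_mem _ (hm (Subtype.mem _))]
    rfl
  · apply Finset.sum_eq_zero
    intro k _
    simp only [Matrix.diag_apply, LinearMap.toMatrix_apply, DirectSum.IsInternal.collectedBasis_coe]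
    exact h.collectedBasis_repr_of_mem_ne b hi (hf _ (Subtype.mem (b i k)))

theorem finrank_internal {ι V : Type} [AddCommGroup V] [Module ℂ V] [FiniteDimensional ℂ V]
    [Fintype ι] [DecidableEq ι]
    {N : ι → Submodule ℂ V} (h : DirectSum.IsInternal N) :
    finrank ℂ V = ∑ i, finrank ℂ (N i) := by
  rw [← Module.finrank_directSum]
  exact (LinearEquiv.ofBijective (DirectSum.coeLinearMap N) h).finrank_eq.symm

theorem imprim {G V : Type} [Group G] [Finite G] [AddCommGroup V] [Module ℂ V]
    [FiniteDimensional ℂ V] {T : G → Module.End ℂ V} (h : PR T) (hI : Irr T) (Y : Submodule ℂ V)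
    (hbot : Y ≠ ⊥) (htop : Y ≠ ⊤) (hind : sSupIndep (Set.range fun x => Y.map (T x)))
    (g : G) (hg : LinearMap.trace ℂ V (T g) ≠ 0) :
    ∃ H : Subgroup G, H ≠ ⊤ ∧ ∃ S : H → Module.End ℂ Y, PR S ∧ Irr S ∧
      finrank ℂ V = H.index * finrank ℂ Y ∧
      ∃ (x : G) (hx : x⁻¹ * g * x ∈ H), LinearMap.trace ℂ Y (S ⟨_, hx⟩) ≠ 0 := by
  classical
  let act : MulAction G (Submodule ℂ V) :=
    { smul := fun g W => W.map (T g)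
      one_smul := fun W => h.map_one W
      mul_smul := fun a b W => (h.map_map a b W).symm }
  have smul_def : ∀ (g : G) (W : Submodule ℂ V), g • W = W.map (T g) := fun _ _ => rfl
  have horb : (Set.range fun x => Y.map (T x)) = MulAction.orbit G Y := rfl
  rw [horb] at hind
  set H := MulAction.stabilizer G Y with hH
  have hmem : ∀ x, x ∈ H ↔ Y.map (T x) = Y := fun x => by
    rw [hH, MulAction.mem_stabilizer_iff]; rfl
  have hsup : ⨆ i : MulAction.orbit G Y, (i : Submodule ℂ V) = ⊤ := by
    rcases hI.2 (⨆ i : MulAction.orbit G Y, (i : Submodule ℂ V)) (fun x w hw => by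
      have : (⨆ i : MulAction.orbit G Y, (i : Submodule ℂ V)).map (T x) ≤
        ⨆ i : MulAction.orbit G Y, (i : Submodule ℂ V) := by
        rw [Submodule.map_iSup]
        apply iSup_le
        intro i
        exact le_iSup (fun i : MulAction.orbit G Y => (i : Submodule ℂ V)) (x • i)
      exact this (Submodule.mem_map_of_mem hw)) with h0 | h0
    · exfalso
      apply hbot
      rw [eq_bot_iff, ← h0]
      exact le_iSup (fun i : MulAction.orbit G Y => (i : Submodule ℂ V))
        ⟨Y, MulAction.mem_orbit_self Y⟩
    · exact h0
  have hint : DirectSum.IsInternal (fun i : MulAction.orbit G Y => (i : Submodule ℂ V)) :=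
    DirectSum.isInternal_submodule_of_iSupIndep_of_iSup_eq_top
      ((sSupIndep_iff _).1 hind) hsup
  have hfin : Finite (MulAction.orbit G Y) := (Set.finite_range (fun x : G => x • Y)).to_subtype
  let _ : Fintype (MulAction.orbit G Y) := Fintype.ofFinite _
  have hS : ∀ x : H, ∀ y ∈ Y, T x y ∈ Y := fun x y hy => by
    have := (hmem x).1 x.2
    rw [← this]
    exact Submodule.mem_map_of_mem hy
  let S : H → Module.End ℂ Y := fun x => (T x).restrict (hS x)
  refine ⟨H, ?_, S, ⟨?_, ?_⟩, ⟨?_, ?_⟩, ?_, ?_⟩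
  · intro hHt
    rcases hI.2 Y (fun i w hw => hS ⟨i, hHt ▸ Subgroup.mem_top i⟩ w hw) with h0 | h0
    · exact hbot h0
    · exact htop h0
  · intro x
    rw [Module.End.isUnit_iff]
    have hinj : Function.Injective (S x) := by
      intro a b hab
      apply Subtype.ext
      apply h.inj x
      exact congrArg Subtype.val hab
    exact ⟨hinj, LinearMap.surjective_of_injective hinj⟩
  · intro a b
    obtain ⟨c, hc, h1⟩ := h.2 a b
    refine ⟨c, hc, ?_⟩
    ext y
    exact LinearMap.congr_fun h1 y
  · exact (Submodule.nontrivial_iff_ne_bot).2 hbot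
  · intro Y' hY'
    set Y2 := Y'.map Y.subtype with hY2
    have hle : Y2 ≤ Y := Submodule.map_subtype_le Y Y'
    set D := sSup (MulAction.orbit G Y \ {Y}) with hD
    have hdis : Disjoint Y D := hind (MulAction.mem_orbit_self Y)
    rcases hI.2 (⨆ x : G, Y2.map (T x)) (fun x w hw => by
      have : (⨆ x : G, Y2.map (T x)).map (T x) ≤ ⨆ x : G, Y2.map (T x) := by
        rw [Submodule.map_iSup]
        apply iSup_le
        intro i
        rw [h.map_map]
        exact le_iSup (fun x : G => Y2.map (T x)) (x * i)
      exact this (Submodule.mem_map_of_mem hw)) with h0 | h0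
    · left
      have h1 : Y2 ≤ ⊥ := by
        rw [← h0]
        have := le_iSup (fun x : G => Y2.map (T x)) 1
        simpa only [h.map_one] using this
      rw [eq_bot_iff]
      intro y hy
      have : (y : V) ∈ (⊥ : Submodule ℂ V) := h1 ⟨y, hy, rfl⟩
      rw [Submodule.mem_bot] at this ⊢
      exact Subtype.ext this
    · right
      have h1 : Y2 ⊔ D = ⊤ := by
        rw [eq_top_iff, ← h0]
        apply iSup_le
        intro x
        by_cases hx : x ∈ H
        · apply le_sup_of_le_left
          rintro _ ⟨_, ⟨y, hy, rfl⟩, rfl⟩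
          exact ⟨S ⟨x, hx⟩ y, hY' _ _ hy, rfl⟩
        · apply le_sup_of_le_right
          refine le_trans (Submodule.map_mono hle) (le_sSup ⟨⟨x, rfl⟩, ?_⟩)
          intro hx'
          exact hx ((hmem x).2 hx')
      have h2 : Y2 = Y := by
        have := sup_inf_assoc_of_le (x := Y2) D (z := Y) hle
        rw [h1, top_inf_eq, inf_comm, hdis.eq_bot, sup_bot_eq] at this
        exact this.symm
      rw [eq_top_iff]
      intro y _
      have : (y : V) ∈ Y2 := h2.ge y.2
      obtain ⟨z, hz, hzy⟩ := this
      have : z = y := Subtype.ext hzy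
      exact this ▸ hz
  · have h1 : ∀ i ∈ (Finset.univ : Finset (MulAction.orbit G Y)),
        finrank ℂ (i : Submodule ℂ V) = finrank ℂ Y := by
      rintro ⟨_, x, rfl⟩ _
      exact (Submodule.equivMapOfInjective (T x) (h.inj x) Y).finrank_eq.symm
    have h2 : H.index = Fintype.card (MulAction.orbit G Y) := by
      rw [hH, MulAction.index_stabilizer, ← Nat.card_eq_fintype_card]
      rfl
    rw [finrank_internal hint, Finset.sum_const_nat h1, h2, Finset.card_univ]
  · obtain ⟨⟨_, x, rfl⟩, hfix, htr⟩ := trace_block hint (T g) (fun i => g • i)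
      (fun i v hv => Submodule.mem_map_of_mem hv) hg
    have hfix' : g • (x • Y) = x • Y := congrArg Subtype.val hfix
    have hx : x⁻¹ * g * x ∈ H := by
      rw [hH, MulAction.mem_stabilizer_iff, mul_smul, mul_smul, hfix', inv_smul_smul]
    refine ⟨x, hx, ?_⟩
    have hm : Set.MapsTo (T g) (Y.map (T x) : Submodule ℂ V) (Y.map (T x) : Submodule ℂ V) := by
      intro v hv
      have : T g v ∈ g • (x • Y) := Submodule.mem_map_of_mem hv
      rw [hfix'] at this
      exact this
    have h1 := htr hm
    let e := Submodule.equivMapOfInjective (T x) (h.inj x) Y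
    have hpro : Pro ((T g).restrict hm) (e.conj (S ⟨_, hx⟩)) := by
      have h2 := h.conj x (x⁻¹ * g * x)
      have h3 : x * (x⁻¹ * g * x) * x⁻¹ = g := by group
      rw [h3] at h2
      obtain ⟨c, hc, h4⟩ := h2.symm
      refine ⟨c, hc, ?_⟩
      apply LinearMap.ext
      intro v
      obtain ⟨y, rfl⟩ := e.surjective v
      apply Subtype.ext
      have := LinearMap.congr_fun h4 y
      simp only [LinearMap.smul_apply, LinearEquiv.conj_apply_apply, LinearEquiv.symm_apply_apply]
      exact this
    have := hpro.trace_ne h1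
    rwa [LinearMap.trace_conj'] at this

end

section
open Module

/-- The algebra generated by the operators of a subgroup. -/
noncomputable abbrev alg {G V : Type} [Group G] [AddCommGroup V] [Module ℂ V]
    (T : G → Module.End ℂ V) (N : Subgroup G) : Subalgebra ℂ (Module.End ℂ V) :=
  Algebra.adjoin ℂ (T '' (N : Set G))

section Cl
variable {G V : Type} [Group G] [AddCommGroup V] [Module ℂ V]
  {T : G → Module.End ℂ V} {N : Subgroup G}

theorem T_mem_alg {n : G} (hn : n ∈ N) : T n ∈ alg T N :=
  Algebra.subset_adjoin ⟨n, hn, rfl⟩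

theorem alg_inv {W : Submodule ℂ V} (hW : ∀ n ∈ N, ∀ w ∈ W, T n w ∈ W)
    {a : Module.End ℂ V} (ha : a ∈ alg T N) : ∀ w ∈ W, a w ∈ W := by
  induction ha using Algebra.adjoin_induction with
  | mem x hx => obtain ⟨n, hn, rfl⟩ := hx; exact hW n hn
  | algebraMap r => intro w hw; exact W.smul_mem r hw
  | add x y _ _ hx hy => intro w hw; exact W.add_mem (hx w hw) (hy w hw)
  | mul x y _ _ hx hy => intro w hw; exact hx _ (hy w hw)

/-- Invariant subspaces are submodules. -/
def toA (W : Submodule ℂ V) (hW : ∀ n ∈ N, ∀ w ∈ W, T n w ∈ W) : Submodule (alg T N) V where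
  carrier := W
  add_mem' := W.add_mem
  zero_mem' := W.zero_mem
  smul_mem' := fun a w hw => alg_inv hW a.2 w hw

theorem alg_comm {f : Module.End ℂ V} (hf : ∀ n ∈ N, f * T n = T n * f)
    {a : Module.End ℂ V} (ha : a ∈ alg T N) : f * a = a * f := by
  induction ha using Algebra.adjoin_induction with
  | mem x hx => obtain ⟨n, hn, rfl⟩ := hx; exact hf n hn
  | algebraMap r => exact (Algebra.commutes r f).symm
  | add x y _ _ hx hy => rw [mul_add, add_mul, hx, hy]
  | mul x y _ _ hx hy => rw [← mul_assoc, hx, mul_assoc, hy, mul_assoc]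

/-- Commuting operators are module endomorphisms. -/
def toEndA (f : Module.End ℂ V) (hf : ∀ n ∈ N, f * T n = T n * f) : Module.End (alg T N) V where
  toFun := f
  map_add' := f.map_add
  map_smul' := fun a v => LinearMap.congr_fun (alg_comm hf a.2) v

theorem endA_comm (f : Module.End (alg T N) V) {n : G} (hn : n ∈ N) (v : V) :
    f (T n v) = T n (f v) :=
  f.map_smul (⟨T n, T_mem_alg hn⟩ : alg T N) v

theorem sub_inv (m : Submodule (alg T N) V) {n : G} (hn : n ∈ N) {v : V} (hv : v ∈ m) :
    T n v ∈ m :=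
  m.smul_mem (⟨T n, T_mem_alg hn⟩ : alg T N) hv

theorem conj_inv_sub (h : PR T) [N.Normal] (g : G) (m : Submodule (alg T N) V) :
    ∀ n ∈ N, ∀ w ∈ (m.restrictScalars ℂ).map (T g), T n w ∈ (m.restrictScalars ℂ).map (T g) := by
  rintro n hn _ ⟨w, hw, rfl⟩
  have h1 := h.conj g (g⁻¹ * n * g)
  have h2 : g * (g⁻¹ * n * g) * g⁻¹ = n := by group
  rw [h2] at h1
  obtain ⟨c, hc, h3⟩ := h1.symm
  have h4 := LinearMap.congr_fun h3 w
  simp only [Module.End.mul_apply, LinearMap.smul_apply] at h4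
  rw [h4]
  refine Submodule.smul_mem _ _ (Submodule.mem_map_of_mem ?_)
  have hmem : g⁻¹ * n * g ∈ N := by
    have := ‹N.Normal›.conj_mem n hn g⁻¹
    rwa [inv_inv] at this
  exact sub_inv m hmem hw

/-- Conjugate of a submodule. -/
noncomputable def cj0 (h : PR T) [N.Normal] (g : G) (m : Submodule (alg T N) V) :
    Submodule (alg T N) V := toA _ (conj_inv_sub h g m)

theorem cj0_restrict (h : PR T) [N.Normal] (g : G) (m : Submodule (alg T N) V) :
    (cj0 h g m).restrictScalars ℂ = (m.restrictScalars ℂ).map (T g) := rfl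

theorem cj0_cj0 (h : PR T) [N.Normal] (g g' : G) (m : Submodule (alg T N) V) :
    cj0 h g (cj0 h g' m) = cj0 h (g * g') m := by
  apply Submodule.restrictScalars_injective ℂ
  rw [cj0_restrict, cj0_restrict, cj0_restrict, h.map_map]

theorem cj0_one (h : PR T) [N.Normal] (m : Submodule (alg T N) V) :
    cj0 h 1 m = m := by
  apply Submodule.restrictScalars_injective ℂ
  rw [cj0_restrict, h.map_one]

theorem cj0_mono (h : PR T) [N.Normal] (g : G) {m m' : Submodule (alg T N) V} (hm : m ≤ m') :
    cj0 h g m ≤ cj0 h g m' := by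
  rintro _ ⟨w, hw, rfl⟩
  exact ⟨w, hm hw, rfl⟩

/-- Conjugation as an order isomorphism. -/
noncomputable def cj (h : PR T) [N.Normal] (g : G) :
    Submodule (alg T N) V ≃o Submodule (alg T N) V where
  toFun := cj0 h g
  invFun := cj0 h g⁻¹
  left_inv := fun m => by rw [cj0_cj0, inv_mul_cancel, cj0_one]
  right_inv := fun m => by rw [cj0_cj0, mul_inv_cancel, cj0_one]
  map_rel_iff' := by
    intro a b
    refine ⟨fun hab => ?_, fun hab => cj0_mono h g hab⟩
    have := cj0_mono h g⁻¹ hab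
    simpa only [Equiv.coe_fn_mk, cj0_cj0, inv_mul_cancel, cj0_one] using this

theorem clifford_ss [FiniteDimensional ℂ V] (h : PR T) (hI : Irr T) [N.Normal] :
    IsSemisimpleModule (alg T N) V := by
  have := hI.1
  have hart : IsArtinian (alg T N) V := isArtinian_of_tower ℂ inferInstance
  obtain ⟨U, hU⟩ := IsAtomic.exists_atom (Submodule (alg T N) V)
  refine isSemisimpleModule_of_isSemisimpleModule_submodule' (p := fun g : G => cj h g U) ?_ ?_
  · intro g
    have : IsSimpleModule (alg T N) (cj h g U) :=
      isSimpleModule_iff_isAtom.2 (((cj h g).isAtom_iff U).2 hU)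
    infer_instance
  · rcases hI.2 ((⨆ g, cj h g U).restrictScalars ℂ) (fun x w hw => by
      have h1 : cj h x (⨆ g, cj h g U) ≤ ⨆ g, cj h g U := by
        rw [OrderIso.map_iSup]
        apply iSup_le
        intro g
        have : cj h x (cj h g U) = cj h (x * g) U := cj0_cj0 h x g U
        rw [this]
        exact le_iSup (fun g => cj h g U) (x * g)
      exact h1 (Submodule.mem_map_of_mem (p := (⨆ g, cj h g U).restrictScalars ℂ) hw)) with h0 | h0
    · exfalso
      apply hU.1
      rw [Submodule.restrictScalars_eq_bot_iff] at h0
      rw [eq_bot_iff, ← h0]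
      have := le_iSup (fun g => cj h g U) 1
      have h1 : cj h 1 U = U := cj0_one h U
      rwa [h1] at this
    · rwa [Submodule.restrictScalars_eq_top_iff] at h0

theorem fi_cj (h : PR T) [N.Normal] (g : G) {m : Submodule (alg T N) V}
    (hm : m.IsFullyInvariant) : (cj h g m).IsFullyInvariant := by
  rintro f _ ⟨w, hw, rfl⟩
  obtain ⟨u, hu⟩ := h.1 g
  let f0 : Module.End ℂ V := f.restrictScalars ℂ
  have hf0 : ∀ n ∈ N, f0 * T n = T n * f0 := fun n hn => LinearMap.ext fun v => endA_comm f hn v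
  let f1 : Module.End ℂ V := ↑u⁻¹ * f0 * u
  have hf1 : ∀ n ∈ N, f1 * T n = T n * f1 := by
    intro n hn
    obtain ⟨c, hc, h1⟩ := h.conj g n
    have h2 := hf0 _ (‹N.Normal›.conj_mem n hn g)
    rw [← hu] at h1
    calc ↑u⁻¹ * f0 * ↑u * T n = ↑u⁻¹ * f0 * (↑u * T n) := by simp only [mul_assoc]
      _ = c • (↑u⁻¹ * (f0 * T (g * n * g⁻¹)) * u) := by
        rw [h1, mul_smul_comm]; simp only [mul_assoc]
      _ = ↑u⁻¹ * (c • (T (g * n * g⁻¹) * u)) * ↑u⁻¹ * f0 * u := by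
        rw [h2, mul_smul_comm, smul_mul_assoc, smul_mul_assoc, smul_mul_assoc]
        congr 1
        simp only [mul_assoc]
        rw [Units.mul_inv_cancel_left]
      _ = T n * (↑u⁻¹ * f0 * ↑u) := by
        rw [← h1]
        simp only [mul_assoc]
        rw [Units.inv_mul_cancel_left]
  have h3 := hm (toEndA f1 hf1) hw
  refine ⟨f1 w, h3, ?_⟩
  show T g (f1 w) = f (T g w)
  rw [← hu]
  show ((u : Module.End ℂ V) * (↑u⁻¹ * f0 * u)) w = f ((u : Module.End ℂ V) w)
  rw [mul_assoc, Units.mul_inv_cancel_left]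
  rfl

theorem mem_iso_iff {R M : Type} [Ring R] [AddCommGroup M] [Module R M] [IsSemisimpleModule R M]
    {m : Submodule R M} : m ∈ isotypicComponents R M ↔ m ≠ ⊥ ∧ m.IsFullyInvariant ∧
      ∀ m' : Submodule R M, m'.IsFullyInvariant → m' ≤ m → m' ≠ ⊥ → m' = m := by
  constructor
  · intro hm
    refine ⟨(bot_lt_isotypicComponents hm).ne', .of_mem_isotypicComponents hm, ?_⟩
    intro m' hm' hle hne
    obtain ⟨S, hS, hSs⟩ := (IsSemisimpleModule.eq_bot_or_exists_simple_le m').resolve_left hne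
    have h1 := isFullyInvariant_iff_le_imp_isotypicComponent_le.1 hm' S hS
    have h2 := eq_isotypicComponent_of_le hm (hS.trans hle)
    exact le_antisymm hle (h2 ▸ h1)
  · rintro ⟨hne, hfi, hmin⟩
    obtain ⟨S, hS, hSs⟩ := (IsSemisimpleModule.eq_bot_or_exists_simple_le m).resolve_left hne
    have h1 := isFullyInvariant_iff_le_imp_isotypicComponent_le.1 hfi S hS
    exact ⟨S, hSs, (hmin _ (.isotypicComponent R M S) h1 (bot_lt_isotypicComponent S).ne').symm⟩

theorem fi_cj_iff (h : PR T) [N.Normal] (g : G) {m : Submodule (alg T N) V}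
    (hm : (cj h g m).IsFullyInvariant) : m.IsFullyInvariant := by
  have := fi_cj h g⁻¹ hm
  have h1 : cj h g⁻¹ (cj h g m) = m := (cj h g).symm_apply_apply m
  rwa [h1] at this

theorem cj_iso [FiniteDimensional ℂ V] (h : PR T) (hI : Irr T) [N.Normal] (g : G)
    {m : Submodule (alg T N) V}
    (hm : m ∈ isotypicComponents (alg T N) V) : cj h g m ∈ isotypicComponents (alg T N) V := by
  have := clifford_ss (N := N) h hI
  rw [mem_iso_iff] at hm ⊢
  refine ⟨?_, fi_cj h g hm.2.1, ?_⟩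
  · intro h0
    apply hm.1
    apply (cj h g).injective
    rw [h0]
    exact (OrderIso.map_bot _).symm
  · intro m' hfi hle hne
    obtain ⟨m, rfl⟩ := (cj h g).surjective m'
    rw [hm.2.2 m (fi_cj_iff h g hfi) ((cj h g).le_iff_le.1 hle) (by
      rintro rfl; exact hne (OrderIso.map_bot _))]

theorem clifford [FiniteDimensional ℂ V] (h : PR T) (hI : Irr T) [N.Normal] :
    (∃ U : Submodule (alg T N) V, IsSimpleModule (alg T N) U ∧ IsIsotypicOfType (alg T N) V U) ∨
    ∃ Y : Submodule ℂ V, Y ≠ ⊥ ∧ Y ≠ ⊤ ∧ sSupIndep (Set.range fun x => Y.map (T x)) := by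
  have hss := clifford_ss (N := N) h hI
  have := hI.1
  obtain ⟨U, hU⟩ := IsSemisimpleModule.exists_simple_submodule (alg T N) V
  set c := isotypicComponent (alg T N) V U with hc
  have hcm : c ∈ isotypicComponents (alg T N) V := ⟨U, hU, rfl⟩
  by_cases htop : c = ⊤
  · left
    exact ⟨U, hU, .of_isotypicComponent_eq_top htop⟩
  · right
    refine ⟨c.restrictScalars ℂ, ?_, ?_, ?_⟩
    · rw [Ne, Submodule.restrictScalars_eq_bot_iff]; exact (bot_lt_isotypicComponents hcm).ne'
    · rw [Ne, Submodule.restrictScalars_eq_top_iff]; exact htop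
    · have hind := sSupIndep_isotypicComponents (alg T N) V
      rintro _ ⟨x, rfl⟩
      have h1 := hind (cj_iso h hI x hcm)
      rw [Submodule.disjoint_def] at h1 ⊢
      intro v hv hv'
      refine h1 v hv ?_
      have h2 : sSup ((Set.range fun x => (c.restrictScalars ℂ).map (T x)) \
          {(c.restrictScalars ℂ).map (T x)}) ≤
          (sSup (isotypicComponents (alg T N) V \ {cj h x c})).restrictScalars ℂ := by
        apply sSup_le
        rintro _ ⟨⟨y, rfl⟩, hy⟩
        have h3 : cj h y c ≤ sSup (isotypicComponents (alg T N) V \ {cj h x c}) := by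
          apply le_sSup
          refine ⟨cj_iso h hI y hcm, ?_⟩
          intro hxy
          apply hy
          exact congrArg (Submodule.restrictScalars ℂ) hxy
        exact h3
      exact h2 hv'

end Cl

end

section
open Module
open scoped TensorProduct

set_option linter.unusedSectionVars false
set_option linter.unusedTactic false

section SplitOp

theorem irr_hom_bij {ι U : Type} [AddCommGroup U] [Module ℂ U] [FiniteDimensional ℂ U]
    {a b : ι → Module.End ℂ U} (ha : Irr a) (f : Module.End ℂ U)
    (hf : ∀ i u, f (a i u) = b i (f u)) (hne : f ≠ 0) : IsUnit f := by
  have hinj : Function.Injective f := by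
    rw [← LinearMap.ker_eq_bot]
    rcases ha.2 (LinearMap.ker f) (fun i w hw => by
      rw [LinearMap.mem_ker] at hw ⊢
      rw [hf, hw, map_zero]) with h0 | h0
    · exact h0
    · exact absurd (LinearMap.ker_eq_top.1 h0) hne
  rw [Module.End.isUnit_iff]
  exact ⟨hinj, LinearMap.injective_iff_surjective.1 hinj⟩

theorem split_op {ι U : Type} [AddCommGroup U] [Module ℂ U] [FiniteDimensional ℂ U] {k : ℕ}
    [Nontrivial (Fin k → U)] {a b : ι → Module.End ℂ U} (ha : Irr a)
    (F : Module.End ℂ (Fin k → U)) (hu : IsUnit F)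
    (hF : ∀ i (v : Fin k → U), F (fun j => a i (v j)) = fun j => b i (F v j)) :
    ∃ (R : Module.End ℂ U) (Q : Module.End ℂ (Fin k → ℂ)), IsUnit R ∧ IsUnit Q ∧
      ∀ (u : U) (w : Fin k → ℂ), F (fun j => w j • u) = fun j => Q w j • R u := by
  classical
  let f : Fin k → Fin k → Module.End ℂ U := fun i j =>
    LinearMap.proj i ∘ₗ F ∘ₗ LinearMap.single ℂ (fun _ => U) j
  have hf : ∀ i j u, f i j u = F (Pi.single j u) i := fun i j u => rfl
  have hFs : ∀ (v : Fin k → U) i, F v i = ∑ j, f i j (v j) := by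
    intro v i
    conv_lhs => rw [← Finset.univ_sum_single v]
    rw [map_sum, Finset.sum_apply]
    rfl
  have hfc : ∀ i j l u, f i j (a l u) = b l (f i j u) := by
    intro i j l u
    have := congrFun (hF l (Pi.single j u)) i
    rw [hf, hf, ← this]
    have h2 : (Pi.single j (a l u) : Fin k → U) = fun j' => a l ((Pi.single j u : Fin k → U) j') := by
      funext j'
      by_cases hj : j' = j
      · subst hj; simp
      · simp [Pi.single_eq_of_ne hj]
    rw [h2]
  have hex : ∃ i j, f i j ≠ 0 := by
    by_contra hcon
    push Not at hcon
    obtain ⟨v, hv⟩ := exists_ne (0 : Fin k → U)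
    have hinj := ((Module.End.isUnit_iff _).1 hu).1
    apply hv
    apply hinj
    rw [map_zero]
    ext i
    rw [hFs]
    simp [hcon]
  obtain ⟨i0, j0, h0⟩ := hex
  have hRu : IsUnit (f i0 j0) := irr_hom_bij ha _ (hfc i0 j0) h0
  obtain ⟨R, hR⟩ := hRu
  have hq : ∀ i j, ∃ c : ℂ, f i j = c • (R : Module.End ℂ U) := by
    intro i j
    obtain ⟨c, hc⟩ := ha.schur (↑R⁻¹ * f i j) (by
      intro l
      have h1 : f i j * a l = b l * f i j := LinearMap.ext (hfc i j l)
      have h2 : (R : Module.End ℂ U) * a l = b l * R := by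
        rw [hR]; exact LinearMap.ext (hfc i0 j0 l)
      rw [mul_assoc, h1, ← mul_assoc, ← mul_assoc]
      congr 1
      calc _ = ↑R⁻¹ * (b l * ↑R) * ↑R⁻¹ := by simp [mul_assoc]
        _ = _ := by rw [← h2]; simp [← mul_assoc])
    refine ⟨c, ?_⟩
    have : f i j = ↑R * (↑R⁻¹ * f i j) := by simp
    rw [this, hc]; simp
  choose q hq using hq
  have key : ∀ (u : U) (w : Fin k → ℂ),
      F (fun j => w j • u) = fun j => (Matrix.mulVecLin (Matrix.of q)) w j • (R : Module.End ℂ U) u := by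
    intro u w
    ext i
    rw [hFs]
    simp only [hq, LinearMap.smul_apply, map_smul, Matrix.mulVecLin_apply, Matrix.mulVec,
      dotProduct, Matrix.of_apply, Finset.sum_smul, smul_smul, mul_comm]
  refine ⟨R, Matrix.mulVecLin (Matrix.of q), R.isUnit, ?_, key⟩
  have hinj : Function.Injective (Matrix.mulVecLin (Matrix.of q)) := by
    rw [← LinearMap.ker_eq_bot, LinearMap.ker_eq_bot']
    intro w hw
    have := ha.1
    obtain ⟨u, hu0⟩ := exists_ne (0 : U)
    have h1 := key u w
    rw [hw] at h1
    have h2 : F (fun j => w j • u) = F 0 := by rw [h1, map_zero]; ext; simp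
    have h3 := ((Module.End.isUnit_iff _).1 hu).1 h2
    ext j
    have h4 := congrFun h3 j
    simpa [hu0] using h4
  rw [Module.End.isUnit_iff]
  exact ⟨hinj, LinearMap.injective_iff_surjective.1 hinj⟩

theorem tmul_pro {U W : Type} [AddCommGroup U] [Module ℂ U] [AddCommGroup W] [Module ℂ W]
    [Nontrivial U] [Nontrivial W]
    {A A' : Module.End ℂ U} {B B' : Module.End ℂ W} (hA : IsUnit A) (hB : IsUnit B) (c : ℂ)
    (h : ∀ u w, A u ⊗ₜ[ℂ] B w = c • (A' u ⊗ₜ[ℂ] B' w)) : Pro A A' ∧ Pro B B' := by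
  obtain ⟨u0, hu0⟩ := exists_ne (0 : U)
  obtain ⟨w0, hw0⟩ := exists_ne (0 : W)
  have hAi := ((Module.End.isUnit_iff _).1 hA).1
  have hBi := ((Module.End.isUnit_iff _).1 hB).1
  have hAu : A u0 ≠ 0 := fun h => hu0 (hAi (by rw [h, map_zero]))
  have hBw : B w0 ≠ 0 := fun h => hw0 (hBi (by rw [h, map_zero]))
  constructor
  · obtain ⟨φ, hφ⟩ := not_forall.1 ((Module.forall_dual_apply_eq_zero_iff ℂ (B w0)).not.2 hBw)
    have h1 : ∀ u, A u = ((φ (B w0))⁻¹ * (c * φ (B' w0))) • A' u := by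
      intro u
      have := congrArg (fun t => TensorProduct.rid ℂ U (LinearMap.lTensor U φ t)) (h u w0)
      simp only [LinearMap.lTensor_tmul, TensorProduct.rid_tmul, map_smul] at this
      rw [mul_smul, ← smul_smul c, ← this, smul_smul, inv_mul_cancel₀ hφ, one_smul]
    refine ⟨_, ?_, LinearMap.ext h1⟩
    intro h0
    apply hAu
    rw [h1, h0, zero_smul]
  · obtain ⟨φ, hφ⟩ := not_forall.1 ((Module.forall_dual_apply_eq_zero_iff ℂ (A u0)).not.2 hAu)
    have h1 : ∀ w, B w = ((φ (A u0))⁻¹ * (c * φ (A' u0))) • B' w := by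
      intro w
      have := congrArg (fun t => TensorProduct.lid ℂ W (LinearMap.rTensor W φ t)) (h u0 w)
      simp only [LinearMap.rTensor_tmul, TensorProduct.lid_tmul, map_smul] at this
      rw [mul_smul, ← smul_smul c, ← this, smul_smul, inv_mul_cancel₀ hφ, one_smul]
    refine ⟨_, ?_, LinearMap.ext h1⟩
    intro h0
    apply hBw
    rw [h1, h0, zero_smul]

end SplitOp

/-- Tensor splitting of a projective representation along a subgroup. -/
structure HS {G V : Type} [Group G] [AddCommGroup V] [Module ℂ V]
    (T : G → Module.End ℂ V) (N : Subgroup G) where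
  U : Type
  W : Type
  iU : AddCommGroup U
  jU : Module ℂ U
  fU : FiniteDimensional ℂ U
  iW : AddCommGroup W
  jW : Module ℂ W
  fW : FiniteDimensional ℂ W
  e : U ⊗[ℂ] W ≃ₗ[ℂ] V
  R : G → Module.End ℂ U
  Q : G → Module.End ℂ W
  r : N → Module.End ℂ U
  hr : Irr r
  hr' : ∀ (n : N) u w, T n (e (u ⊗ₜ w)) = e (r n u ⊗ₜ w)
  hR : ∀ g, IsUnit (R g)
  hQ : ∀ g, IsUnit (Q g)
  hT : ∀ g u w, T g (e (u ⊗ₜ w)) = e (R g u ⊗ₜ Q g w)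

attribute [instance] HS.iU HS.jU HS.fU HS.iW HS.jW HS.fW

section Homog
variable {G V : Type} [Group G] [AddCommGroup V] [Module ℂ V] [FiniteDimensional ℂ V]
  {T : G → Module.End ℂ V} {N : Subgroup G}

theorem homog (h : PR T) (hI : Irr T) [N.Normal] (U : Submodule (alg T N) V)
    (hU : IsSimpleModule (alg T N) U) (hi : IsIsotypicOfType (alg T N) V U) :
    Nonempty (HS T N) := by
  classical
  have := hI.1
  have hss := clifford_ss (N := N) h hI
  have hfin : Module.Finite (alg T N) V := Module.Finite.of_restrictScalars_finite ℂ _ _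
  obtain ⟨k, ⟨φ⟩⟩ := hi.linearEquiv_fun
  let U0 : Submodule ℂ V := U.restrictScalars ℂ
  let φ' : V ≃ₗ[ℂ] (Fin k → U0) :=
    { toFun := φ
      invFun := φ.symm
      left_inv := φ.left_inv
      right_inv := φ.right_inv
      map_add' := φ.map_add
      map_smul' := fun c v => φ.map_smul (algebraMap ℂ (alg T N) c) v }
  have hnt : Nontrivial (Fin k → U0) := φ'.symm.toEquiv.nontrivial
  let r : N → Module.End ℂ U0 := fun n =>
    { toFun := fun u => ⟨T n u, sub_inv U n.2 u.2⟩
      map_add' := fun x y => Subtype.ext ((T n).map_add _ _)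
      map_smul' := fun c x => Subtype.ext ((T n).map_smul _ _) }
  have hφr : ∀ (n : N) (v : Fin k → U0), T n (φ'.symm v) = φ'.symm (fun j => r n (v j)) := by
    intro n v
    exact (φ.symm.map_smul (⟨T n, T_mem_alg n.2⟩ : alg T N) v).symm
  have hr : Irr r := by
    refine ⟨IsSimpleModule.nontrivial (alg T N) U, fun W hW => ?_⟩
    let W' : Submodule ℂ V := W.map U0.subtype
    have hW' : ∀ n ∈ N, ∀ w ∈ W', T n w ∈ W' := by
      rintro n hn _ ⟨w, hw, rfl⟩
      exact ⟨r ⟨n, hn⟩ w, hW ⟨n, hn⟩ w hw, rfl⟩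
    have hat := isSimpleModule_iff_isAtom.1 hU
    have hle : toA W' hW' ≤ U := by
      rintro _ ⟨w, hw, rfl⟩
      exact w.2
    rcases hat.le_iff.1 hle with h0 | h0
    · left
      rw [eq_bot_iff]
      intro w hw
      have : (w : V) ∈ toA W' hW' := ⟨w, hw, rfl⟩
      rw [h0] at this
      exact Subtype.ext this
    · right
      rw [eq_top_iff]
      intro w _
      have : (w : V) ∈ toA W' hW' := by rw [h0]; exact w.2
      obtain ⟨w', hw', hww⟩ := this
      have : w' = w := Subtype.ext hww
      exact this ▸ hw'
  have hmain : ∀ g : G, ∃ (R : Module.End ℂ U0) (Q : Module.End ℂ (Fin k → ℂ)),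
      IsUnit R ∧ IsUnit Q ∧ ∀ (u : U0) (w : Fin k → ℂ),
        T g (φ'.symm fun j => w j • u) = φ'.symm fun j => Q w j • R u := by
    intro g
    choose c hc hcg using h.conj g
    let b : N → Module.End ℂ U0 := fun n =>
      c n • r ⟨g * n * g⁻¹, ‹N.Normal›.conj_mem n n.2 g⟩
    obtain ⟨R, Q, hR, hQ, hF⟩ := split_op (b := b) hr (φ'.toLinearMap ∘ₗ T g ∘ₗ φ'.symm.toLinearMap)
      (by
        rw [Module.End.isUnit_iff]
        have := (Module.End.isUnit_iff _).1 (h.1 g)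
        exact φ'.bijective.comp (this.comp φ'.symm.bijective)) (by
        intro n v
        show φ' (T g (φ'.symm fun j => r n (v j))) = _
        rw [← hφr]
        have h1 := LinearMap.congr_fun (hcg n) (φ'.symm v)
        simp only [Module.End.mul_apply, LinearMap.smul_apply] at h1
        rw [h1]
        have h2 := hφr ⟨g * n * g⁻¹, ‹N.Normal›.conj_mem n n.2 g⟩ (φ' (T g (φ'.symm v)))
        rw [φ'.symm_apply_apply] at h2
        simp only at h2
        rw [h2, map_smul, φ'.apply_symm_apply]
        rfl)
    refine ⟨R, Q, hR, hQ, fun u w => ?_⟩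
    have := hF u w
    rw [← this]
    simp
  choose R Q hR hQ hT using hmain
  exact ⟨{ U := U0, W := Fin k → ℂ, iU := inferInstance, jU := inferInstance, fU := inferInstance
           iW := inferInstance, jW := inferInstance, fW := inferInstance
           e := (TensorProduct.piScalarRight ℂ ℂ U0 (Fin k)).trans φ'.symm
           R := R, Q := Q, r := r, hr := hr
           hr' := by
            intro n u w
            simp only [LinearEquiv.trans_apply, TensorProduct.piScalarRight_apply,
              TensorProduct.piScalarRightHom_tmul]
            rw [hφr]
            simp
           hR := hR, hQ := hQ
           hT := by
            intro n u w
            simp only [LinearEquiv.trans_apply, TensorProduct.piScalarRight_apply,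
              TensorProduct.piScalarRightHom_tmul]
            rw [hT] }⟩

end Homog

namespace HS
section
variable {G V : Type} [Group G] [AddCommGroup V] [Module ℂ V] [FiniteDimensional ℂ V]
  {T : G → Module.End ℂ V} {N : Subgroup G} (D : HS T N)

theorem ntU : Nontrivial D.U := D.hr.1

theorem ntW [Nontrivial V] : Nontrivial D.W := by
  by_contra hcon
  rw [not_nontrivial_iff_subsingleton] at hcon
  obtain ⟨v, hv⟩ := exists_ne (0 : V)
  apply hv
  have h0 : ∀ x : D.U ⊗[ℂ] D.W, x = 0 := by
    intro x
    induction x with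
    | zero => rfl
    | tmul u w => rw [Subsingleton.elim w 0, TensorProduct.tmul_zero]
    | add x y hx hy => rw [hx, hy, add_zero]
  rw [← D.e.apply_symm_apply v, h0 (D.e.symm v), map_zero]

theorem hT' (g : G) : T g = D.e.conj (TensorProduct.map (D.R g) (D.Q g)) := by
  apply LinearMap.ext
  intro v
  obtain ⟨x, rfl⟩ := D.e.surjective v
  rw [LinearEquiv.conj_apply_apply, D.e.symm_apply_apply]
  induction x with
  | zero => simp
  | tmul u w => rw [D.hT]; rfl
  | add x y hx hy => simp only [map_add, hx, hy]

theorem trace_eq (g : G) : LinearMap.trace ℂ V (T g) =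
    LinearMap.trace ℂ D.U (D.R g) * LinearMap.trace ℂ D.W (D.Q g) := by
  rw [D.hT', LinearMap.trace_conj', LinearMap.trace_tensorProduct']

theorem finrank_eq : finrank ℂ V = finrank ℂ D.U * finrank ℂ D.W := by
  rw [← D.e.finrank_eq, Module.finrank_tensorProduct]

theorem pro_R [Nontrivial V] (n : N) : Pro (D.R n) (D.r n) ∧ Pro (D.Q n) 1 := by
  have := D.ntU
  have := D.ntW
  refine tmul_pro (D.hR n) (D.hQ n) 1 fun u w => ?_
  apply D.e.injective
  rw [← D.hT, D.hr', one_smul]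
  rfl

theorem pr (h : PR T) [Nontrivial V] (g g' : G) :
    Pro (D.R (g * g')) (D.R g * D.R g') ∧ Pro (D.Q (g * g')) (D.Q g * D.Q g') := by
  have := D.ntU
  have := D.ntW
  obtain ⟨c, hc, h1⟩ := h.2 g g'
  refine tmul_pro (D.hR _) (D.hQ _) c fun u w => ?_
  apply D.e.injective
  rw [← D.hT, h1, map_smul, Module.End.mul_apply, Module.End.mul_apply, ← D.hT, ← D.hT]
  rfl

theorem prR (h : PR T) [Nontrivial V] : PR D.R := ⟨D.hR, fun g g' => (D.pr h g g').1⟩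
theorem prQ (h : PR T) [Nontrivial V] : PR D.Q := ⟨D.hQ, fun g g' => (D.pr h g g').2⟩

theorem irrR [Nontrivial V] : Irr (fun n : N => D.R n) :=
  D.hr.mono fun n => ⟨n, (D.pro_R n).1.symm⟩

theorem irrQ {ι : Type} (f : ι → G) (hI : Irr fun i => T (f i)) : Irr fun i => D.Q (f i) := by
  have := hI.1
  have := D.ntU
  have := D.ntW
  refine ⟨D.ntW, fun Y hY => ?_⟩
  obtain ⟨u0, hu0⟩ := exists_ne (0 : D.U)
  let Z : Submodule ℂ V := (LinearMap.range (LinearMap.lTensor D.U Y.subtype)).map D.e.toLinearMap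
  have hZ : ∀ i, ∀ z ∈ Z, T (f i) z ∈ Z := by
    rintro i _ ⟨_, ⟨x, rfl⟩, rfl⟩
    induction x with
    | zero => simp
    | tmul u w =>
      refine ⟨D.R (f i) u ⊗ₜ D.Q (f i) w, ⟨D.R (f i) u ⊗ₜ ⟨D.Q (f i) w, hY i w w.2⟩, rfl⟩, ?_⟩
      exact (D.hT _ _ _).symm
    | add x y hx hy =>
      simp only [map_add]
      exact Z.add_mem hx hy
  rcases hI.2 Z hZ with h0 | h0
  · left
    rw [eq_bot_iff]
    intro w hw
    have h1 : D.e (u0 ⊗ₜ w) ∈ Z := ⟨_, ⟨u0 ⊗ₜ ⟨w, hw⟩, rfl⟩, rfl⟩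
    rw [h0, Submodule.mem_bot, LinearEquiv.map_eq_zero_iff] at h1
    rw [Submodule.mem_bot]
    obtain ⟨φ, hφ⟩ := not_forall.1 ((Module.forall_dual_apply_eq_zero_iff ℂ u0).not.2 hu0)
    have h2 := congrArg (fun t => TensorProduct.lid ℂ D.W (LinearMap.rTensor D.W φ t)) h1
    simp only [LinearMap.rTensor_tmul, TensorProduct.lid_tmul, map_zero] at h2
    exact (smul_eq_zero.1 h2).resolve_left hφ
  · right
    rw [eq_top_iff]
    intro w _
    obtain ⟨φ, hφ⟩ := not_forall.1 ((Module.forall_dual_apply_eq_zero_iff ℂ u0).not.2 hu0)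
    have h1 : D.e (u0 ⊗ₜ w) ∈ Z := h0 ▸ Submodule.mem_top
    obtain ⟨t, ⟨x, rfl⟩, ht⟩ := h1
    have ht' := D.e.injective ht
    have h2 : ∀ x : D.U ⊗[ℂ] Y, TensorProduct.lid ℂ D.W (LinearMap.rTensor D.W φ
        (LinearMap.lTensor D.U Y.subtype x)) ∈ Y := by
      intro x
      induction x with
      | zero => simp
      | tmul u w => simpa using Y.smul_mem _ w.2
      | add x y hx hy => simp only [map_add]; exact Y.add_mem hx hy
    have h3 := h2 x
    rw [ht'] at h3
    simp only [LinearMap.rTensor_tmul, TensorProduct.lid_tmul] at h3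
    exact (Y.smul_mem_iff hφ).1 h3

end
end HS

end

section
open Module

theorem burnside {ι V : Type} [AddCommGroup V] [Module ℂ V] [FiniteDimensional ℂ V]
    {T : ι → Module.End ℂ V} (h : Irr T) : Algebra.adjoin ℂ (Set.range T) = ⊤ := by
  set A := Algebra.adjoin ℂ (Set.range T) with hA
  have hinv : ∀ (W : Submodule A V) i, ∀ w ∈ W, T i w ∈ W := fun W i w hw =>
    W.smul_mem (⟨T i, Algebra.subset_adjoin ⟨i, rfl⟩⟩ : A) hw
  have hs : IsSimpleModule A V := by
    have := h.1
    refine { eq_bot_or_eq_top := fun W => ?_ }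
    rcases h.2 (W.restrictScalars ℂ) (hinv W) with h0 | h0
    · left; rwa [Submodule.restrictScalars_eq_bot_iff] at h0
    · right; rwa [Submodule.restrictScalars_eq_top_iff] at h0
  have hsc : ∀ f : Module.End A V, ∃ c : ℂ, ∀ v, f v = c • v := by
    intro f
    obtain ⟨c, hc⟩ := h.schur (f.restrictScalars ℂ) (fun i => LinearMap.ext fun v =>
      f.map_smul (⟨T i, Algebra.subset_adjoin ⟨i, rfl⟩⟩ : A) v)
    exact ⟨c, fun v => LinearMap.congr_fun hc v⟩
  have hfin : Module.Finite (Module.End A V) V := by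
    obtain ⟨s, hs⟩ := (Module.finite_def (R := ℂ) (M := V)).1 inferInstance
    refine ⟨⟨s, ?_⟩⟩
    rw [eq_top_iff]
    intro v _
    have hv : v ∈ Submodule.span ℂ (s : Set V) := hs ▸ Submodule.mem_top
    induction hv using Submodule.span_induction with
    | mem x hx => exact Submodule.subset_span hx
    | zero => exact Submodule.zero_mem _
    | add x y _ _ hx hy => exact Submodule.add_mem _ (hx trivial) (hy trivial)
    | smul c x _ hx =>
      exact Submodule.smul_mem _ (algebraMap ℂ (Module.End A V) c) (hx trivial)
  rw [eq_top_iff]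
  intro f _
  let f' : Module.End (Module.End A V) V :=
    { toFun := f
      map_add' := f.map_add
      map_smul' := fun g v => by
        obtain ⟨c, hc⟩ := hsc g
        simp only [Module.End.smul_def, hc, map_smul, RingHom.id_apply] }
  obtain ⟨a, ha⟩ := Module.Finite.toModuleEnd_moduleEnd_surjective (R := A) (M := V) f'
  have : f = a := LinearMap.ext fun v => (LinearMap.congr_fun ha v).symm
  rw [this]
  exact a.2

theorem trace_unique {U : Type} [AddCommGroup U] [Module ℂ U] [FiniteDimensional ℂ U]
    [Nontrivial U]
    (ψ : Module.End ℂ U →ₗ[ℂ] ℂ) (hψ : ∀ x y, ψ (x * y) = ψ (y * x)) :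
    ∃ c : ℂ, ∀ x, ψ x = c * LinearMap.trace ℂ U x := by
  classical
  let b := Module.finBasis ℂ U
  have hpos : 0 < finrank ℂ U := Module.finrank_pos
  let i0 : Fin (finrank ℂ U) := ⟨0, hpos⟩
  let L := LinearMap.toMatrixAlgEquiv b
  let φ : Matrix (Fin (finrank ℂ U)) (Fin (finrank ℂ U)) ℂ →ₗ[ℂ] ℂ := ψ ∘ₗ L.symm.toLinearMap
  have hφ : ∀ x y, φ (x * y) = φ (y * x) := by
    intro x y
    show ψ (L.symm (x * y)) = ψ (L.symm (y * x))
    rw [map_mul L.symm, map_mul L.symm, hψ]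
  have h1 : ∀ i j, i ≠ j → φ (Matrix.single i j 1) = 0 := by
    intro i j hij
    have h2 := hφ (Matrix.single i i 1) (Matrix.single i j 1)
    rw [Matrix.single_mul_single_same, Matrix.single_mul_single_of_ne _ _ _ _ hij.symm] at h2
    simpa using h2
  have h2 : ∀ i, φ (Matrix.single i i 1) = φ (Matrix.single i0 i0 1) := by
    intro i
    have h2 := hφ (Matrix.single i i0 1) (Matrix.single i0 i 1)
    rw [Matrix.single_mul_single_same, Matrix.single_mul_single_same] at h2
    simpa using h2
  have h3 : ∀ M, φ M = φ (Matrix.single i0 i0 1) * M.trace := by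
    intro M
    conv_lhs => rw [Matrix.matrix_eq_sum_single M]
    simp only [map_sum]
    have h4 : ∀ i j, φ (Matrix.single i j (M i j)) = M i j * φ (Matrix.single i j 1) := by
      intro i j
      rw [← smul_eq_mul, ← map_smul, Matrix.smul_single, smul_eq_mul, mul_one]
    simp only [h4]
    rw [Matrix.trace, Finset.mul_sum]
    refine Finset.sum_congr rfl fun i _ => ?_
    rw [Finset.sum_eq_single i]
    · rw [h2, Matrix.diag_apply, mul_comm]
    · intro j _ hj
      rw [h1 i j hj.symm, mul_zero]
    · simp
  refine ⟨φ (Matrix.single i0 i0 1), fun x => ?_⟩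
  have h4 := h3 (L x)
  have h5 : φ (L x) = ψ x := by
    show ψ (L.symm (L x)) = _
    rw [AlgEquiv.symm_apply_apply]
  rw [← h5, h4, LinearMap.trace_eq_matrix_trace ℂ b]
  rfl

section Abel
variable {N V : Type} [Group N] [Finite N] [AddCommGroup V] [Module ℂ V] [FiniteDimensional ℂ V]
  {T : N → Module.End ℂ V}

theorem abel_comm (h : PR T) (hc : ∀ a b : N, a * b = b * a) (a b : N) :
    Pro (T a * T b) (T b * T a) := by
  refine (h.2 a b).symm.trans ?_
  rw [hc]
  exact h.2 b a

theorem abel_exp (h : PR T) (hI : Irr T) (hc : ∀ a b : N, a * b = b * a)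
    (hf : ∀ k, Pro (T k) 1 → k = 1) (x : N) : x ^ finrank ℂ V = 1 := by
  apply hf
  refine (h.pow x _).trans ?_
  have := hI.1
  obtain ⟨c, hcc⟩ := hI.schur (T x ^ finrank ℂ V) (by
    intro n
    obtain ⟨β, hβ, h1⟩ := abel_comm h hc x n
    have hβd : β ^ finrank ℂ V = 1 := by
      have h2 := congrArg LinearMap.det h1
      rw [LinearMap.det_smul, map_mul, map_mul, mul_comm (LinearMap.det (T n))] at h2
      have hne : LinearMap.det (T x) * LinearMap.det (T n) ≠ 0 :=
        mul_ne_zero ((h.1 x).map LinearMap.det).ne_zero ((h.1 n).map LinearMap.det).ne_zero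
      exact mul_right_cancel₀ hne (by rw [one_mul]; exact h2.symm)
    have h3 : ∀ k : ℕ, T x ^ k * T n = β ^ k • (T n * T x ^ k) := by
      intro k
      induction k with
      | zero => simp
      | succ k ih =>
        rw [pow_succ, mul_assoc, h1, mul_smul_comm, ← mul_assoc, ih, smul_mul_assoc, smul_smul,
          mul_assoc, pow_succ, mul_comm]
    rw [h3, hβd, one_smul])
  refine ⟨c, ?_, hcc⟩
  rintro rfl
  rw [zero_smul] at hcc
  have hu := (h.1 x).pow (finrank ℂ V)
  rw [hcc] at hu
  exact not_isUnit_zero hu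

theorem abel_trace (h : PR T) (hI : Irr T) (hc : ∀ a b : N, a * b = b * a)
    (hf : ∀ k, Pro (T k) 1 → k = 1) (x : N) (hx : x ≠ 1) : LinearMap.trace ℂ V (T x) = 0 := by
  by_contra ht
  apply hx
  apply hf
  obtain ⟨c, hcc⟩ := hI.schur (T x) (by
    intro n
    obtain ⟨β, hβ, h1⟩ := abel_comm h hc x n
    have hβ1 : β = 1 := by
      obtain ⟨u, hu⟩ := h.1 n
      rw [← hu] at h1
      have h2 : T x = β • (↑u * T x * ↑u⁻¹) := by
        rw [← smul_mul_assoc, ← h1, mul_assoc, Units.mul_inv, mul_one]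
      have h3 := congrArg (LinearMap.trace ℂ V) h2
      rw [map_smul, LinearMap.trace_mul_cycle, Units.inv_mul, one_mul, smul_eq_mul] at h3
      exact mul_right_cancel₀ ht (by rw [one_mul]; exact h3.symm)
    rw [h1, hβ1, one_smul])
  have := hI.1
  refine ⟨c, ?_, hcc⟩
  rintro rfl
  rw [zero_smul] at hcc
  have hu := h.1 x
  rw [hcc] at hu
  exact not_isUnit_zero hu

theorem abel_card (h : PR T) (hI : Irr T) (hc : ∀ a b : N, a * b = b * a)
    (hf : ∀ k, Pro (T k) 1 → k = 1) : Nat.card N = finrank ℂ V * finrank ℂ V := by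
  have := hI.1
  have := Fintype.ofFinite N
  classical
  have hli : LinearIndependent ℂ T := by
    rw [Fintype.linearIndependent_iff]
    intro a ha m
    have h1 := congrArg (fun M => LinearMap.trace ℂ V (T m⁻¹ * M)) ha
    simp only [Finset.mul_sum, map_sum, mul_zero, map_zero, mul_smul_comm, map_smul] at h1
    rw [Finset.sum_eq_single m] at h1
    · obtain ⟨c, hcc, h2⟩ := h.inv' m
      rw [h2, map_smul, LinearMap.trace_one, smul_eq_mul, smul_eq_mul] at h1
      have hd : (finrank ℂ V : ℂ) ≠ 0 := by
        exact_mod_cast (Module.finrank_pos (R := ℂ) (M := V)).ne'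
      simpa [hcc, hd] using h1
    · intro n _ hn
      obtain ⟨c, hcc, h2⟩ := (h.2 m⁻¹ n).symm
      rw [h2, map_smul, abel_trace h hI hc hf, smul_zero, smul_zero]
      intro h3
      exact hn (inv_mul_eq_one.1 h3).symm
    · simp
  have hsp : ⊤ ≤ Submodule.span ℂ (Set.range T) := by
    intro f _
    have hfA : f ∈ Algebra.adjoin ℂ (Set.range T) := by rw [burnside hI]; trivial
    induction hfA using Algebra.adjoin_induction with
    | mem x hx => exact Submodule.subset_span hx
    | algebraMap r =>
      rw [Algebra.algebraMap_eq_smul_one]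
      obtain ⟨c, hcc, h1⟩ := h.one.symm
      rw [h1]
      exact Submodule.smul_mem _ _ (Submodule.smul_mem _ _ (Submodule.subset_span ⟨1, rfl⟩))
    | add x y _ _ hx hy => exact Submodule.add_mem _ (hx trivial) (hy trivial)
    | mul x y _ _ hx hy =>
      have h1 := Submodule.mul_mem_mul (hx trivial) (hy trivial)
      rw [Submodule.span_mul_span] at h1
      refine Submodule.span_le.2 ?_ h1
      rintro _ ⟨_, ⟨a, rfl⟩, _, ⟨b, rfl⟩, rfl⟩
      obtain ⟨c, hcc, h1⟩ := (h.2 a b).symm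
      show T a * T b ∈ _
      rw [h1]
      exact Submodule.smul_mem _ _ (Submodule.subset_span ⟨_, rfl⟩)
  have h1 := Module.finrank_eq_card_basis (Basis.mk hli hsp)
  rw [Nat.card_eq_fintype_card, ← h1]
  exact Module.finrank_linearMap ℂ ℂ V V

end Abel

end

section
open Module

/-- The inductive claim. -/
def WC (n : ℕ) : Prop := ∀ (G V : Type) [Group G] [Finite G] [AddCommGroup V] [Module ℂ V]
  [FiniteDimensional ℂ V] (T : G → Module.End ℂ V), PR T → Irr T →
  Nat.card G + finrank ℂ V < n → ∀ g, LinearMap.trace ℂ V (T g) ≠ 0 →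
  orderOf g * finrank ℂ V ∣ Nat.card G

/-- Elements acting by scalars. -/
def scal {G V : Type} [Group G] [AddCommGroup V] [Module ℂ V] (T : G → Module.End ℂ V)
    (h : PR T) : Subgroup G where
  carrier := {k | Pro (T k) 1}
  one_mem' := h.one
  mul_mem' := fun {a b} ha hb => by
    have h1 := (h.2 a b).trans (ha.mul hb)
    rwa [mul_one] at h1
  inv_mem' := fun {a} ha => by
    have h1 := (h.inv a).symm.trans (ha.mul (Pro.refl (T a⁻¹)))
    rw [one_mul] at h1
    exact h1.symm

theorem scal_normal {G V : Type} [Group G] [AddCommGroup V] [Module ℂ V]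
    (T : G → Module.End ℂ V) (h : PR T) : (scal T h).Normal := by
  constructor
  intro n hn g
  have hn' : Pro (T n) 1 := hn
  show Pro (T (g * n * g⁻¹)) 1
  have h1 := (h.2 (g * n) g⁻¹).trans ((h.2 g n).mul (Pro.refl (T g⁻¹)))
  have h2 := h1.trans (((Pro.refl (T g)).mul hn').mul (Pro.refl _))
  rw [mul_one] at h2
  exact h2.trans (h.inv g)

theorem card_sup {G : Type} [Group G] [Finite G] (N : Subgroup G) [N.Normal] (g : G) :
    Nat.card ↥(N ⊔ Subgroup.zpowers g) =
      orderOf (QuotientGroup.mk g : G ⧸ N) * Nat.card N := by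
  have h1 : N ⊔ Subgroup.zpowers g =
      (Subgroup.zpowers (QuotientGroup.mk g : G ⧸ N)).comap (QuotientGroup.mk' N) := by
    have h2 : Subgroup.zpowers (QuotientGroup.mk g : G ⧸ N) =
        (Subgroup.zpowers g).map (QuotientGroup.mk' N) := by
      rw [MonoidHom.map_zpowers]; rfl
    rw [h2, Subgroup.comap_map_eq, QuotientGroup.ker_mk', sup_comm]
  have h3 : (N ⊔ Subgroup.zpowers g).index =
      (Subgroup.zpowers (QuotientGroup.mk g : G ⧸ N)).index := by
    rw [h1]
    exact Subgroup.index_comap_of_surjective _ (QuotientGroup.mk'_surjective N)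
  have h4 := (N ⊔ Subgroup.zpowers g).card_mul_index
  have h5 := (Subgroup.zpowers (QuotientGroup.mk g : G ⧸ N)).card_mul_index
  have h6 := N.card_mul_index
  rw [Nat.card_zpowers] at h5
  have h7 : N.index = Nat.card (G ⧸ N) := rfl
  have h8 : (Subgroup.zpowers (QuotientGroup.mk g : G ⧸ N)).index ≠ 0 :=
    Subgroup.index_ne_zero_of_finite
  rw [h3, ← h6, h7, ← h5] at h4
  apply Nat.eq_of_mul_eq_mul_right (Nat.pos_of_ne_zero h8)
  rw [h4]; ring

theorem card_quot_lt {G : Type} [Group G] [Finite G] (N : Subgroup G) (hN : N ≠ ⊥) :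
    Nat.card (G ⧸ N) < Nat.card G := by
  have h1 := N.card_mul_index
  have h2 : 1 < Nat.card N := by
    rw [Subgroup.one_lt_card_iff_ne_bot]; exact hN
  have h3 : N.index = Nat.card (G ⧸ N) := rfl
  have h4 : 0 < Nat.card (G ⧸ N) := Nat.card_pos
  rw [← h1, h3]
  nlinarith

theorem card_sub_lt {G : Type} [Group G] [Finite G] (H : Subgroup G) (hH : H ≠ ⊤) :
    Nat.card H < Nat.card G := by
  refine lt_of_le_of_ne (Subgroup.card_le_card_group H) fun h => hH ?_
  exact Subgroup.eq_top_of_card_eq H h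

section Red
variable {G V : Type} [Group G] [Finite G] [AddCommGroup V] [Module ℂ V]
  [FiniteDimensional ℂ V] {T : G → Module.End ℂ V} {n : ℕ}

theorem order_quot (N : Subgroup G) [N.Normal] (g : G) :
    orderOf g ∣ orderOf (QuotientGroup.mk g : G ⧸ N) * Nat.card N := by
  apply orderOf_dvd_of_pow_eq_one
  rw [pow_mul]
  have h1 : g ^ orderOf (QuotientGroup.mk g : G ⧸ N) ∈ N := by
    rw [← QuotientGroup.eq_one_iff, QuotientGroup.mk_pow, pow_orderOf_eq_one]
  have h2 : (⟨_, h1⟩ : N) ^ Nat.card N = 1 := pow_card_eq_one'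
  exact congrArg Subtype.val h2

theorem red_faithful (hn : WC n) (h : PR T) (hI : Irr T) (hc : Nat.card G + finrank ℂ V ≤ n)
    (g : G) (ht : LinearMap.trace ℂ V (T g) ≠ 0) (hK : scal T h ≠ ⊥) :
    orderOf g * finrank ℂ V ∣ Nat.card G := by
  have hnorm := scal_normal T h
  obtain ⟨S, hS, hSI, hSp⟩ := h.quot hI (scal T h) (fun k hk => hk)
  have h1 := hn _ _ S hS hSI (by have := card_quot_lt _ hK; omega) (QuotientGroup.mk g)
    ((hSp g).symm.trace_ne ht)
  have h2 := (scal T h).card_mul_index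
  have h3 : (scal T h).index = Nat.card (G ⧸ scal T h) := rfl
  rw [← h2, h3]
  calc _ ∣ (orderOf (QuotientGroup.mk g : G ⧸ scal T h) * Nat.card (scal T h)) * finrank ℂ V :=
        mul_dvd_mul (order_quot _ g) dvd_rfl
    _ = Nat.card (scal T h) * (orderOf (QuotientGroup.mk g : G ⧸ scal T h) * finrank ℂ V) := by ring
    _ ∣ _ := mul_dvd_mul dvd_rfl h1

theorem red_norm (hn : WC n) (h : PR T) (hI : Irr T) (hc : Nat.card G + finrank ℂ V ≤ n)
    (g : G) (ht : LinearMap.trace ℂ V (T g) ≠ 0) (N : Subgroup G) [N.Normal] (hN : N ≠ ⊥) :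
    orderOf g * finrank ℂ V ∣ Nat.card G ∨
      (N ⊔ Subgroup.zpowers g = ⊤ ∧ Irr (fun x : N => T x)) := by
  have hnt := hI.1
  rcases clifford (N := N) h hI with ⟨U, hU, hUi⟩ | ⟨Y, hY0, hY1, hYi⟩
  · obtain ⟨D⟩ := homog h hI U hU hUi
    have hdim := D.finrank_eq
    have := D.ntU
    have := D.ntW
    have hU0 : 0 < finrank ℂ D.U := Module.finrank_pos
    have hW0 : 0 < finrank ℂ D.W := Module.finrank_pos
    rw [D.trace_eq] at ht
    have hQI : Irr D.Q := D.irrQ (fun x => x) hI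
    obtain ⟨S, hS, hSI, hSp⟩ := (D.prQ h).quot hQI N (fun k hk => (D.pro_R ⟨k, hk⟩).2)
    have h1 := hn _ _ S hS hSI (by
      have := card_quot_lt _ hN
      have : finrank ℂ D.W ≤ finrank ℂ V := by rw [hdim]; exact Nat.le_mul_of_pos_left _ hU0
      omega) (QuotientGroup.mk g) ((hSp g).symm.trace_ne (right_ne_zero_of_mul ht))
    have hUle : finrank ℂ D.U ≤ finrank ℂ V := by
      rw [hdim]; exact Nat.le_mul_of_pos_right _ hW0
    set H := N ⊔ Subgroup.zpowers g with hH
    have hgH : g ∈ H := (le_sup_right : _ ≤ H) (Subgroup.mem_zpowers g)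
    by_cases hcase : Nat.card H + finrank ℂ D.U < n
    · left
      have hRI : Irr (fun x : H => D.R x) :=
        D.irrR.mono fun x => ⟨⟨x, (le_sup_left : _ ≤ H) x.2⟩, Pro.refl _⟩
      have h2 := hn _ _ _ ((D.prR h).sub H) hRI hcase ⟨g, hgH⟩ (left_ne_zero_of_mul ht)
      rw [Subgroup.orderOf_mk, card_sup] at h2
      have h3 := N.card_mul_index
      have h4 : N.index = Nat.card (G ⧸ N) := rfl
      obtain ⟨k, hk⟩ := h1
      obtain ⟨l, hl⟩ := h2
      refine ⟨k * l, ?_⟩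
      rw [← h3, h4, hk, hdim]
      calc _ = (orderOf (QuotientGroup.mk g : G ⧸ N) * Nat.card N) * (finrank ℂ D.W * k) := by ring
        _ = _ := by rw [hl]; ring
    · right
      have hHc := Subgroup.card_le_card_group H
      have hHe : H = ⊤ := by
        by_contra hne
        have := card_sub_lt H hne
        omega
      have hde : finrank ℂ D.U = finrank ℂ V := by omega
      refine ⟨hHe, ?_⟩
      obtain ⟨w0, hw0⟩ := exists_ne (0 : D.W)
      let f : D.U →ₗ[ℂ] V := D.e.toLinearMap ∘ₗ (TensorProduct.mk ℂ D.U D.W).flip w0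
      have hf : ∀ u, f u = D.e (u ⊗ₜ w0) := fun u => rfl
      have hinj : Function.Injective f := by
        rw [← LinearMap.ker_eq_bot, LinearMap.ker_eq_bot']
        intro u hu
        rw [hf, LinearEquiv.map_eq_zero_iff] at hu
        obtain ⟨φ, hφ⟩ := not_forall.1 ((Module.forall_dual_apply_eq_zero_iff ℂ w0).not.2 hw0)
        have h2 := congrArg (fun t => TensorProduct.rid ℂ D.U (LinearMap.lTensor D.U φ t)) hu
        simp only [LinearMap.lTensor_tmul, TensorProduct.rid_tmul, map_zero] at h2
        exact (smul_eq_zero.1 h2).resolve_left hφ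
      let f' := LinearEquiv.ofInjectiveOfFinrankEq f hinj hde
      refine D.hr.of_linearEquiv f' fun x u => ?_
      show f (D.r x u) = T x (f u)
      rw [hf, hf, D.hr']
  · left
    obtain ⟨H, hH, S, hS, hSI, hdim, x, hx, htx⟩ := imprim h hI Y hY0 hY1 hYi g ht
    have h1 := hn _ _ S hS hSI (by
      have := card_sub_lt H hH
      have := Submodule.finrank_le Y
      omega) ⟨_, hx⟩ htx
    rw [Subgroup.orderOf_mk] at h1
    have h2 : orderOf (x⁻¹ * g * x) = orderOf g := by
      have := (MulAut.conj x⁻¹).orderOf_eq g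
      simpa using this
    rw [h2] at h1
    rw [hdim, ← H.card_mul_index, mul_left_comm, mul_comm (Nat.card H)]
    exact mul_dvd_mul dvd_rfl h1

theorem abel_case (h : PR T) (g : G) (N : Subgroup G) [N.Normal]
    (hf : ∀ k, Pro (T k) 1 → k = 1)
    (hsup : N ⊔ Subgroup.zpowers g = ⊤) (hI : Irr (fun x : N => T x))
    (hab : ∀ a b : N, a * b = b * a) : orderOf g * finrank ℂ V ∣ Nat.card G := by
  have hf' : ∀ k : N, Pro (T k) 1 → k = 1 := fun k hk => Subtype.ext (hf k hk)
  have h1 := abel_card (h.sub N) hI hab hf'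
  have h2 := abel_exp (h.sub N) hI hab hf'
  have h3 := card_sup N g
  rw [hsup, h1, Subgroup.card_top] at h3
  rw [h3, ← mul_assoc]
  refine mul_dvd_mul ?_ dvd_rfl
  apply orderOf_dvd_of_pow_eq_one
  rw [pow_mul]
  have h4 : g ^ orderOf (QuotientGroup.mk g : G ⧸ N) ∈ N := by
    rw [← QuotientGroup.eq_one_iff, QuotientGroup.mk_pow, pow_orderOf_eq_one]
  exact congrArg Subtype.val (h2 ⟨_, h4⟩)

end Red

end

section
open Module
open scoped commutatorElement

/-- Elements whose operators commute exactly with a given operator. -/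
def commSub {G V : Type} [Group G] [AddCommGroup V] [Module ℂ V] (T : G → Module.End ℂ V)
    (h : PR T) (X : Module.End ℂ V) : Subgroup G where
  carrier := {s | X * T s = T s * X}
  one_mem' := by
    obtain ⟨c, hc, h1⟩ := h.one
    show X * T 1 = T 1 * X
    rw [h1, mul_smul_comm, smul_mul_assoc, mul_one, one_mul]
  mul_mem' := fun {a b} ha hb => by
    have ha' : X * T a = T a * X := ha
    have hb' : X * T b = T b * X := hb
    obtain ⟨c, hc, h1⟩ := h.2 a b
    show X * T (a * b) = T (a * b) * X
    rw [h1, mul_smul_comm, smul_mul_assoc, ← mul_assoc, ha', mul_assoc, hb', mul_assoc]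
  inv_mem' := fun {a} ha => by
    have ha' : X * T a = T a * X := ha
    obtain ⟨c, hc, h1⟩ := h.inv a
    obtain ⟨d, hd, h2⟩ := h.inv' a
    show X * T a⁻¹ = T a⁻¹ * X
    apply (h.1 a).mul_left_cancel
    rw [← mul_assoc, ← ha', mul_assoc, h1, ← mul_assoc, h1, mul_smul_comm, smul_mul_assoc,
      mul_one, one_mul]

theorem perfect_comm {G V : Type} [Group G] [AddCommGroup V] [Module ℂ V]
    {T : G → Module.End ℂ V} (h : PR T) (S : Subgroup G) (hp : S ≤ ⁅S, S⁆) (x : G)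
    (hx : ∀ s ∈ S, x * s = s * x) : ∀ s ∈ S, T x * T s = T s * T x := by
  have key : ⁅S, S⁆ ≤ commSub T h (T x) := by
    rw [Subgroup.commutator_le]
    intro s hs t ht
    have hcom : ∀ s ∈ S, ∃ c : ℂ, c ≠ 0 ∧ T x * T s = c • (T s * T x) := by
      intro s hs
      have h1 := (h.2 x s).symm
      rw [hx s hs] at h1
      exact h1.trans (h.2 s x)
    obtain ⟨α, hα, ha⟩ := hcom s hs
    obtain ⟨β, hβ, hb⟩ := hcom t ht
    have h1 : Pro (T s * T t) (T ⁅s, t⁆ * (T t * T s)) := by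
      refine (h.2 s t).symm.trans ?_
      have h2 : s * t = ⁅s, t⁆ * (t * s) := by rw [commutatorElement_def]; group
      rw [h2]
      exact (h.2 _ _).trans ((Pro.refl _).mul (h.2 t s))
    obtain ⟨c, hc, h2⟩ := h1
    show T x * T ⁅s, t⁆ = T ⁅s, t⁆ * T x
    have hu : IsUnit (T t * T s) := (h.1 t).mul (h.1 s)
    apply hu.mul_right_cancel
    have e1 : T x * (T s * T t) = (α * β) • (T s * T t * T x) := by
      rw [← mul_assoc, ha, smul_mul_assoc, mul_assoc, hb, mul_smul_comm, smul_smul, mul_assoc]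
    have e2 : T x * (T t * T s) = (α * β) • (T t * T s * T x) := by
      rw [← mul_assoc, hb, smul_mul_assoc, mul_assoc, ha, mul_smul_comm, smul_smul, mul_assoc,
        mul_comm β]
    rw [h2] at e1
    rw [mul_assoc (T ⁅s, t⁆) (T x), e2, mul_assoc]
    rw [mul_smul_comm, smul_mul_assoc, smul_comm] at e1
    have e3 := smul_right_injective _ hc e1
    rw [e3, mul_smul_comm]
    simp only [mul_assoc]
  intro s hs
  exact key (hp hs)

section Grp
variable {G : Type} [Group G] [Finite G]

theorem exists_min_sub (P : Subgroup G → Prop) (hex : ∃ N, P N) :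
    ∃ N, P N ∧ ∀ M, P M → M ≤ N → M = N := by
  classical
  obtain ⟨N, hN⟩ := (Set.toFinite {N | P N}).exists_minimal hex
  exact ⟨N, hN.1, fun M hM hle => le_antisymm hle (hN.2 hM hle)⟩

theorem comm_mem_of_cyclic (C : Subgroup G) [C.Normal] (g : G)
    (hC : C ⊔ Subgroup.zpowers g = ⊤) (S : Subgroup G) : ⁅S, S⁆ ≤ C := by
  rw [Subgroup.commutator_le]
  intro a _ b _
  have hz : ∀ a : G, ∃ k : ℤ, (a : G ⧸ C) = (g : G ⧸ C) ^ k := by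
    intro a
    have ha : a ∈ C ⊔ Subgroup.zpowers g := hC ▸ Subgroup.mem_top a
    obtain ⟨c, hc, d, hd, rfl⟩ := Subgroup.mem_sup_of_normal_left.1 ha
    obtain ⟨k, rfl⟩ := hd
    refine ⟨k, ?_⟩
    simp only
    rw [QuotientGroup.mk_mul, (QuotientGroup.eq_one_iff c).2 hc, one_mul, QuotientGroup.mk_zpow]
  obtain ⟨k, hk⟩ := hz a
  obtain ⟨l, hl⟩ := hz b
  rw [← QuotientGroup.eq_one_iff]
  have : ((⁅a, b⁆ : G) : G ⧸ C) = ⁅(a : G ⧸ C), (b : G ⧸ C)⁆ := rfl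
  rw [this, commutatorElement_eq_one_iff_mul_comm, hk, hl, ← zpow_add, ← zpow_add, add_comm]

/-- Summary of the group-theoretic situation. -/
structure GS (G : Type) [Group G] (N S : Subgroup G) : Prop where
  hN : N.Normal
  hN0 : N ≠ ⊥
  hSN : S ≤ N
  hS0 : S ≠ ⊥
  hNS : ∀ n ∈ N, ∀ s ∈ S, n * s * n⁻¹ ∈ S
  hmin : ∀ S' ≤ S, (∀ n ∈ N, ∀ s ∈ S', n * s * n⁻¹ ∈ S') → S' = ⊥ ∨ S' = S
  hNmin : ∀ M : Subgroup G, M.Normal → M ≤ N → M = ⊥ ∨ M = N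
  hperf : ⁅S, S⁆ = S
  hcen : ∀ x, (∀ n ∈ N, x * n = n * x) → x = 1
  hcen' : ∀ x, (∀ z, ∀ s ∈ S, x * (z * s * z⁻¹) = (z * s * z⁻¹) * x) → x = 1
  hconj : ∀ z, z ∉ Subgroup.normalizer (S : Set G) → ∀ s ∈ S, ∀ s' ∈ S,
    (z * s * z⁻¹) * s' = s' * (z * s * z⁻¹)
  hNle : N ≤ S ⊔ Subgroup.centralizer S

theorem exists_GS [Nontrivial G] (g : G)
    (hall : ∀ M : Subgroup G, M.Normal → M ≠ ⊥ → M ⊔ Subgroup.zpowers g = ⊤)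
    (hnab : ∀ M : Subgroup G, M.Normal → M ≠ ⊥ → ¬ ∀ a ∈ M, ∀ b ∈ M, a * b = b * a) :
    ∃ N S : Subgroup G, GS G N S := by
  obtain ⟨N, ⟨hN, hN0⟩, hNm⟩ := exists_min_sub (fun M : Subgroup G => M.Normal ∧ M ≠ ⊥)
    ⟨⊤, inferInstance, top_ne_bot⟩
  obtain ⟨S, ⟨hSN, hS0, hNS⟩, hSm⟩ := exists_min_sub
    (fun S : Subgroup G => S ≤ N ∧ S ≠ ⊥ ∧ ∀ n ∈ N, ∀ s ∈ S, n * s * n⁻¹ ∈ S)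
    ⟨N, le_rfl, hN0, fun n hn s hs => hN.conj_mem s hs n⟩
  have hmin : ∀ S' ≤ S, (∀ n ∈ N, ∀ s ∈ S', n * s * n⁻¹ ∈ S') → S' = ⊥ ∨ S' = S := by
    intro S' hle hinv
    by_cases h0 : S' = ⊥
    · exact Or.inl h0
    · exact Or.inr (hSm S' ⟨hle.trans hSN, h0, hinv⟩ hle)
  have hNmin : ∀ M : Subgroup G, M.Normal → M ≤ N → M = ⊥ ∨ M = N := by
    intro M hM hle
    by_cases h0 : M = ⊥
    · exact Or.inl h0
    · exact Or.inr (hNm M ⟨hM, h0⟩ hle)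
  have hcl : Subgroup.normalClosure (S : Set G) = N := by
    rcases hNmin _ Subgroup.normalClosure_normal (Subgroup.normalClosure_le_normal hSN) with h0 | h0
    · exact absurd (eq_bot_iff.2 (h0 ▸ Subgroup.le_normalClosure)) hS0
    · exact h0
  have hcl2 : ∀ M : Subgroup G, (∀ z, ∀ s ∈ S, z * s * z⁻¹ ∈ M) → N ≤ M := by
    intro M hM
    rw [← hcl, Subgroup.normalClosure, Subgroup.closure_le]
    intro y hy
    obtain ⟨s, hs, hc⟩ := Group.mem_conjugatesOfSet_iff.1 hy
    obtain ⟨z, rfl⟩ := isConj_iff.1 hc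
    exact hM z s hs
  have hcN : ∀ x, (∀ z, ∀ s ∈ S, x * (z * s * z⁻¹) = (z * s * z⁻¹) * x) →
      ∀ n ∈ N, x * n = n * x := by
    intro x hx n hn
    have := hcl2 (Subgroup.centralizer {x}) (fun z s hs => by
      rw [Subgroup.mem_centralizer_iff]
      rintro _ rfl
      exact hx z s hs) hn
    rw [Subgroup.mem_centralizer_iff] at this
    exact this x rfl
  have hconj : ∀ z, z ∉ Subgroup.normalizer (S : Set G) → ∀ s ∈ S, ∀ s' ∈ S,
      (z * s * z⁻¹) * s' = s' * (z * s * z⁻¹) := by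
    intro z hz s hs s' hs'
    let Sz : Subgroup G := S.map (MulAut.conj z).toMonoidHom
    have hSz : ∀ y, y ∈ Sz ↔ z⁻¹ * y * z ∈ S := by
      intro y
      constructor
      · rintro ⟨x, hx, rfl⟩
        simpa [mul_assoc] using hx
      · intro hy
        exact ⟨_, hy, by simp [mul_assoc]⟩
    have hSzN : ∀ n ∈ N, ∀ s ∈ Sz, n * s * n⁻¹ ∈ Sz := by
      intro n hn y hy
      rw [hSz] at hy ⊢
      have h1 := hNS (z⁻¹ * n * z) (by simpa using hN.conj_mem n hn z⁻¹) _ hy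
      have h2 : z⁻¹ * n * z * (z⁻¹ * y * z) * (z⁻¹ * n * z)⁻¹ = z⁻¹ * (n * y * n⁻¹) * z := by group
      rwa [h2] at h1
    rcases hmin (S ⊓ Sz) inf_le_left (fun n hn y hy =>
      ⟨hNS n hn y hy.1, hSzN n hn y hy.2⟩) with h0 | h0
    · have hzs : z * s * z⁻¹ ∈ Sz := ⟨s, hs, rfl⟩
      have hzN : z * s * z⁻¹ ∈ N := hN.conj_mem s (hSN hs) z
      have h1 : (z * s * z⁻¹) * s' * (z * s * z⁻¹)⁻¹ * s'⁻¹ ∈ S ⊓ Sz := by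
        refine Subgroup.mem_inf.2 ⟨S.mul_mem (hNS _ hzN _ hs') (S.inv_mem hs'), ?_⟩
        have h2 := Sz.mul_mem hzs (hSzN s' (hSN hs') _ (Sz.inv_mem hzs))
        simpa only [mul_assoc] using h2
      rw [h0, Subgroup.mem_bot, mul_inv_eq_one, mul_inv_eq_iff_eq_mul] at h1
      exact h1
    · exfalso
      apply hz
      have hle : S ≤ Sz := by rw [← h0]; exact inf_le_right
      have hcard : Nat.card Sz = Nat.card S :=
        Nat.card_congr (S.equivMapOfInjective _ (MulAut.conj z).injective).toEquiv.symm
      have heq : S = Sz := by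
        apply SetLike.coe_injective
        exact Set.eq_of_subset_of_ncard_le hle (by
          rw [← Nat.card_coe_set_eq, ← Nat.card_coe_set_eq]; exact hcard.le)
      rw [Subgroup.mem_normalizer_iff]
      intro y
      constructor
      · intro hy; rw [heq]; exact ⟨y, hy, rfl⟩
      · intro hy
        have h2 : z * y * z⁻¹ ∈ Sz := heq ▸ hy
        rw [hSz] at h2
        simpa [mul_assoc] using h2
  have hSnab : ¬ ∀ a ∈ S, ∀ b ∈ S, a * b = b * a := by
    intro hab
    apply hnab N hN hN0
    have h1 : ∀ w, ∀ t ∈ S, ∀ z, ∀ s ∈ S,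
        (w * t * w⁻¹) * (z * s * z⁻¹) = (z * s * z⁻¹) * (w * t * w⁻¹) := by
      intro w t ht z s hs
      have h2 : (w⁻¹ * z * s * (w⁻¹ * z)⁻¹) * t = t * (w⁻¹ * z * s * (w⁻¹ * z)⁻¹) := by
        by_cases hn : w⁻¹ * z ∈ Subgroup.normalizer (S : Set G)
        · exact hab _ ((Subgroup.mem_normalizer_iff.1 hn s).1 hs) _ ht
        · exact hconj _ hn s hs t ht
      have h3 : w * (w⁻¹ * z * s * (w⁻¹ * z)⁻¹ * t) * w⁻¹ =
        w * (t * (w⁻¹ * z * s * (w⁻¹ * z)⁻¹)) * w⁻¹ := by rw [h2]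
      have h4 : w * (w⁻¹ * z * s * (w⁻¹ * z)⁻¹ * t) * w⁻¹ = (z * s * z⁻¹) * (w * t * w⁻¹) := by group
      have h5 : w * (t * (w⁻¹ * z * s * (w⁻¹ * z)⁻¹)) * w⁻¹ =
        (w * t * w⁻¹) * (z * s * z⁻¹) := by group
      rw [← h4, ← h5, h3]
    intro a ha b hb
    have h6 : ∀ w, ∀ t ∈ S, ∀ n ∈ N, (w * t * w⁻¹) * n = n * (w * t * w⁻¹) := fun w t ht =>
      hcN _ (h1 w t ht)
    exact (hcN b (fun z s hs => (h6 z s hs b hb).symm) a ha).symm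
  have hperf : ⁅S, S⁆ = S := by
    have hle : ⁅S, S⁆ ≤ S := by
      rw [Subgroup.commutator_le]
      intro a ha b hb
      rw [commutatorElement_def]
      exact S.mul_mem (S.mul_mem (S.mul_mem ha hb) (S.inv_mem ha)) (S.inv_mem hb)
    refine (hmin _ hle ?_).resolve_left ?_
    · intro n hn s hs
      have h1 : n * s * n⁻¹ ∈ (⁅S, S⁆).map (MulAut.conj n).toMonoidHom := ⟨s, hs, rfl⟩
      rw [Subgroup.map_commutator] at h1
      have h2 : S.map (MulAut.conj n).toMonoidHom ≤ S := by
        rintro _ ⟨y, hy, rfl⟩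
        exact hNS n hn y hy
      exact Subgroup.commutator_mono h2 h2 h1
    · intro h0
      apply hSnab
      intro a ha b hb
      have h1 : ⁅a, b⁆ ∈ ⁅S, S⁆ := Subgroup.commutator_mem_commutator ha hb
      rw [h0, Subgroup.mem_bot, commutatorElement_eq_one_iff_mul_comm] at h1
      exact h1
  have hCn : (Subgroup.centralizer (N : Set G)).Normal := inferInstance
  have hC : Subgroup.centralizer (N : Set G) = ⊥ := by
    by_contra hne
    have h1 := comm_mem_of_cyclic _ g (hall _ hCn hne) S
    rw [hperf] at h1
    apply hSnab
    intro a ha b hb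
    exact (Subgroup.mem_centralizer_iff.1 (h1 hb) a (hSN ha))
  have hcen : ∀ x, (∀ n ∈ N, x * n = n * x) → x = 1 := by
    intro x hx
    have h1 : x ∈ Subgroup.centralizer (N : Set G) := by
      rw [Subgroup.mem_centralizer_iff]
      intro n hn
      exact (hx n hn).symm
    rwa [hC, Subgroup.mem_bot] at h1
  refine ⟨N, S, hN, hN0, hSN, hS0, hNS, hmin, hNmin, hperf, hcen,
    fun x hx => hcen x (hcN x hx), hconj, ?_⟩
  apply hcl2
  intro z s hs
  by_cases hz : z ∈ Subgroup.normalizer (S : Set G)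
  · exact Subgroup.mem_sup_left ((Subgroup.mem_normalizer_iff.1 hz s).1 hs)
  · apply Subgroup.mem_sup_right
    rw [Subgroup.mem_centralizer_iff]
    intro t ht
    exact (hconj z hz s hs t ht).symm

end Grp

end

section
open Module
open scoped TensorProduct

theorem trace_step {U V : Type} [AddCommGroup U] [Module ℂ U] [FiniteDimensional ℂ U]
    [Nontrivial U] [AddCommGroup V] [Module ℂ V] [FiniteDimensional ℂ V]
    (j : Module.End ℂ U →ₐ[ℂ] Module.End ℂ V) (τ : (Module.End ℂ V)ˣ) (R : (Module.End ℂ U)ˣ)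
    (t : ℕ) (ht0 : 0 < t)
    (hcomm : ∀ i, 0 < i → i < t → ∀ x y, j x * (↑(τ⁻¹ ^ i) * j y * ↑(τ ^ i)) =
      (↑(τ⁻¹ ^ i) * j y * ↑(τ ^ i)) * j x)
    (ht : ∀ y, j y * ↑(τ ^ t) = ↑(τ ^ t) * j (↑R⁻¹ * y * ↑R))
    (htr : LinearMap.trace ℂ V τ ≠ 0) : LinearMap.trace ℂ U R ≠ 0 := by
  have hY : ∀ i y, (τ : Module.End ℂ V) * (↑(τ⁻¹ ^ (i+1)) * j y * ↑(τ ^ (i+1))) =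
      (↑(τ⁻¹ ^ i) * j y * ↑(τ ^ i)) * τ := by
    intro i y
    rw [pow_succ' τ⁻¹, pow_succ τ, Units.val_mul, Units.val_mul]
    simp only [mul_assoc, Units.mul_inv_cancel_left]
  have h1 : ∀ i, i < t → ∀ x y,
      LinearMap.trace ℂ V (τ * (j x * (↑(τ⁻¹ ^ i) * j y * ↑(τ ^ i)))) =
        LinearMap.trace ℂ V (τ * j (x * y)) := by
    intro i
    induction i with
    | zero => intro _ x y; simp
    | succ i ih =>
      intro hi x y
      rw [hcomm (i+1) (by omega) hi, ← mul_assoc, hY, mul_assoc, LinearMap.trace_mul_comm,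
        mul_assoc, ih (by omega)]
  have h2 : ∀ x y, LinearMap.trace ℂ V (τ * j (x * y)) =
      LinearMap.trace ℂ V (τ * j (↑R⁻¹ * y * ↑R * x)) := by
    intro x y
    obtain ⟨s, rfl⟩ : ∃ s, t = s + 1 := ⟨t - 1, by omega⟩
    rw [← h1 s (by omega)]
    have h3 : j (↑R⁻¹ * y * ↑R) = ↑(τ⁻¹ ^ (s+1)) * j y * ↑(τ ^ (s+1)) := by
      rw [mul_assoc _ (j y), ht, ← mul_assoc _ _ (j _), ← Units.val_mul, inv_pow, inv_mul_cancel, Units.val_one,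
        one_mul]
    rw [map_mul j, h3, ← mul_assoc (τ : Module.End ℂ V) _ (j x), hY, mul_assoc _ _ (j x)]
    rw [LinearMap.trace_mul_comm ℂ _ ((τ : Module.End ℂ V) * j x), mul_assoc (τ : Module.End ℂ V) (j x)]
  let ψ : Module.End ℂ U →ₗ[ℂ] ℂ := LinearMap.trace ℂ V ∘ₗ LinearMap.mulLeft ℂ (τ : Module.End ℂ V) ∘ₗ
    j.toLinearMap ∘ₗ LinearMap.mulLeft ℂ (↑R⁻¹ : Module.End ℂ U)
  have hψ : ∀ x, ψ x = LinearMap.trace ℂ V (τ * j (↑R⁻¹ * x)) := fun x => rfl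
  obtain ⟨c, hc⟩ := trace_unique ψ (by
    intro x y
    rw [hψ, hψ, ← mul_assoc, h2]
    simp [mul_assoc])
  intro h0
  apply htr
  have h4 := hc R
  rw [hψ, h0] at h4
  simpa using h4

theorem comm_ext {ι U A : Type} [AddCommGroup U] [Module ℂ U] [FiniteDimensional ℂ U]
    [Ring A] [Algebra ℂ A] {r : ι → Module.End ℂ U} (h : Irr r) (f : Module.End ℂ U →ₐ[ℂ] A)
    (a : A) (ha : ∀ i, a * f (r i) = f (r i) * a) (x : Module.End ℂ U) : a * f x = f x * a := by
  have hx : x ∈ Algebra.adjoin ℂ (Set.range r) := by rw [burnside h]; trivial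
  induction hx using Algebra.adjoin_induction with
  | mem x hx => obtain ⟨i, rfl⟩ := hx; exact ha i
  | algebraMap c => rw [AlgHom.commutes]; exact (Algebra.commutes c a).symm
  | add x y _ _ hx hy => rw [map_add, mul_add, add_mul, hx, hy]
  | mul x y _ _ hx hy => rw [map_mul, ← mul_assoc, hx, mul_assoc, hy, mul_assoc]

section HSt
variable {G V : Type} [Group G] [AddCommGroup V] [Module ℂ V] [FiniteDimensional ℂ V]
  {T : G → Module.End ℂ V} {N : Subgroup G}

/-- The embedding of the first tensor factor. -/
noncomputable def HS.j (D : HS T N) : Module.End ℂ D.U →ₐ[ℂ] Module.End ℂ V :=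
  (D.e.conjAlgEquiv ℂ).toAlgHom.comp (Module.End.rTensorAlgHom ℂ D.U D.W)

theorem HS.j_apply (D : HS T N) (x : Module.End ℂ D.U) (u : D.U) (w : D.W) :
    D.j x (D.e (u ⊗ₜ w)) = D.e (x u ⊗ₜ w) := by
  simp [HS.j, LinearEquiv.conjAlgEquiv, TensorProduct.liftAux_tmul]

theorem HS.ext' (D : HS T N) {A B : Module.End ℂ V}
    (h : ∀ u w, A (D.e (u ⊗ₜ w)) = B (D.e (u ⊗ₜ w))) : A = B := by
  have : A ∘ₗ D.e.toLinearMap = B ∘ₗ D.e.toLinearMap := TensorProduct.ext' h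
  ext v
  have h2 := LinearMap.congr_fun this (D.e.symm v)
  simpa using h2

theorem HS.j_r (D : HS T N) (n : N) : D.j (D.r n) = T n :=
  D.ext' fun u w => by rw [D.j_apply, D.hr']

theorem HS.j_T (D : HS T N) (g : G) (x y : Module.End ℂ D.U) (hxy : x * D.R g = D.R g * y) :
    D.j x * T g = T g * D.j y :=
  D.ext' fun u w => by
    have := LinearMap.congr_fun hxy u
    simp only [Module.End.mul_apply] at this ⊢
    rw [D.j_apply, D.hT, D.hT, D.j_apply, this]

end HSt

theorem hs_trace {G V : Type} [Group G] [AddCommGroup V] [Module ℂ V] [FiniteDimensional ℂ V]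
    {T : G → Module.End ℂ V} (h : PR T) (H S : Subgroup G) (hp : ⁅S, S⁆ = S) (hSH : S ≤ H)
    (hconj : ∀ z ∉ H, ∀ s ∈ S, ∀ s' ∈ S, (z*s*z⁻¹)*s' = s'*(z*s*z⁻¹))
    (D : HS (fun x : H => T x) (S.subgroupOf H)) (g : G) (t : ℕ) (ht0 : 0 < t)
    (hgt : g ^ t ∈ H) (hgi : ∀ i, 0 < i → i < t → g ^ i ∉ H)
    (htr : LinearMap.trace ℂ V (T g) ≠ 0) :
    LinearMap.trace ℂ D.U (D.R ⟨g ^ t, hgt⟩) ≠ 0 := by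
  have := D.hr.1
  obtain ⟨τ, hτ⟩ := h.1 g
  obtain ⟨R, hR⟩ := D.hR ⟨g ^ t, hgt⟩
  have hp' : S ≤ ⁅S, S⁆ := by rw [hp]
  rw [← hτ] at htr
  rw [← hR]
  have hτi : ∀ i : ℕ, Pro (↑(τ ^ i)) (T (g ^ i)) := fun i => by
    rw [Units.val_pow_eq_pow_val, hτ]; exact (h.pow g i).symm
  have hjs : ∀ s : S.subgroupOf H, D.j (D.r s) = T s.1.1 := fun s => D.j_r s
  refine trace_step D.j τ R t ht0 ?_ ?_ htr
  · intro i hi0 hit x y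
    have hz : g ^ i ∉ H := hgi i hi0 hit
    -- generators
    have h1 : ∀ s s' : S.subgroupOf H,
        (↑(τ ^ i) * D.j (D.r s) * ↑(τ⁻¹ ^ i)) * D.j (D.r s') =
        D.j (D.r s') * (↑(τ ^ i) * D.j (D.r s) * ↑(τ⁻¹ ^ i)) := by
      intro s s'
      rw [hjs, hjs]
      have h2 : Pro ((↑(τ ^ i) : Module.End ℂ V) * T s.1.1 * (↑(τ⁻¹ ^ i) : Module.End ℂ V)) (T (g ^ i * s.1.1 * (g ^ i)⁻¹)) := by
        have h3 : Pro ((↑(τ ^ i) : Module.End ℂ V) * T s.1.1)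
            (T (g ^ i * s.1.1 * (g ^ i)⁻¹) * (↑(τ ^ i) : Module.End ℂ V)) :=
          ((hτi i).mul (Pro.refl _)).trans ((h.conj _ _).trans ((Pro.refl _).mul (hτi i).symm))
        have h4 := h3.mul (Pro.refl (↑(τ⁻¹ ^ i) : Module.End ℂ V))
        rw [mul_assoc (T _), ← Units.val_mul, inv_pow, mul_inv_cancel, Units.val_one,
          mul_one] at h4
        rwa [inv_pow]
      have h5 := perfect_comm h S hp' (g ^ i * s.1.1 * (g ^ i)⁻¹)
        (fun s' hs' => hconj _ hz _ (Subgroup.mem_subgroupOf.1 s.2) _ hs') s'.1.1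
          (Subgroup.mem_subgroupOf.1 s'.2)
      obtain ⟨c, hc, h6⟩ := h2
      rw [h6, smul_mul_assoc, h5, mul_smul_comm]
    have h2 : ∀ s y, (↑(τ ^ i) * D.j (D.r s) * ↑(τ⁻¹ ^ i)) * D.j y =
        D.j y * (↑(τ ^ i) * D.j (D.r s) * ↑(τ⁻¹ ^ i)) := fun s =>
      comm_ext D.hr D.j _ (h1 s)
    have hc1 : (↑(τ ^ i) : Module.End ℂ V) * ↑(τ⁻¹ ^ i) = 1 := by
      rw [← Units.val_mul, inv_pow, mul_inv_cancel, Units.val_one]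
    have hc2 : (↑(τ⁻¹ ^ i) : Module.End ℂ V) * ↑(τ ^ i) = 1 := by
      rw [← Units.val_mul, inv_pow, inv_mul_cancel, Units.val_one]
    have h3 : ∀ s, (↑(τ⁻¹ ^ i) * D.j y * ↑(τ ^ i)) * D.j (D.r s) =
        D.j (D.r s) * (↑(τ⁻¹ ^ i) * D.j y * ↑(τ ^ i)) := by
      intro s
      have h4 := congrArg (fun a => (↑(τ⁻¹ ^ i) : Module.End ℂ V) * a * ↑(τ ^ i)) (h2 s y)
      calc _ = ↑(τ⁻¹ ^ i) * D.j y * ↑(τ ^ i) * D.j (D.r s) * (↑(τ⁻¹ ^ i) * ↑(τ ^ i)) := by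
            rw [hc2, mul_one]
        _ = ↑(τ⁻¹ ^ i) * (D.j y * (↑(τ ^ i) * D.j (D.r s) * ↑(τ⁻¹ ^ i))) * ↑(τ ^ i) := by
            simp only [mul_assoc]
        _ = _ := by
            rw [← h4]
            simp only [← mul_assoc, hc2, one_mul]
    exact (comm_ext D.hr D.j _ h3 x).symm
  · intro y
    obtain ⟨c, hc, h6⟩ := hτi t
    rw [h6, mul_smul_comm, smul_mul_assoc]
    congr 1
    apply D.j_T ⟨g ^ t, hgt⟩
    rw [← hR]
    simp [← mul_assoc]

end

section
open Module
open scoped TensorProduct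

section Stab
variable {G V : Type} [Group G] [AddCommGroup V] [Module ℂ V] {T : G → Module.End ℂ V}

/-- Stabilizer of a subspace. -/
def stab (h : PR T) (c : Submodule ℂ V) : Subgroup G where
  carrier := {x | c.map (T x) = c}
  one_mem' := h.map_one c
  mul_mem' := fun {a b} (ha : c.map (T a) = c) (hb : c.map (T b) = c) => by
    show c.map (T (a * b)) = c
    rw [← h.map_map, hb, ha]
  inv_mem' := fun {a} (ha : c.map (T a) = c) => by
    show c.map (T a⁻¹) = c
    conv_lhs => rw [← ha]
    rw [h.map_map, inv_mul_cancel, h.map_one]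

theorem stab_inv (h : PR T) (c : Submodule ℂ V) {x : G} (hx : x ∈ stab h c) :
    ∀ w ∈ c, T x w ∈ c := by
  intro w hw
  have hx' : c.map (T x) = c := hx
  rw [← hx']
  exact Submodule.mem_map_of_mem hw

theorem mem_stab [FiniteDimensional ℂ V] (h : PR T) (c : Submodule ℂ V) {x : G}
    (hx : ∀ w ∈ c, T x w ∈ c) : x ∈ stab h c := by
  show c.map (T x) = c
  apply Submodule.eq_of_le_of_finrank_eq
  · rintro _ ⟨w, hw, rfl⟩; exact hx w hw
  · exact (Submodule.equivMapOfInjective (T x) (h.inj x) c).symm.finrank_eq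
end Stab

theorem centralizer_le_norm {G : Type} [Group G] (S : Subgroup G) :
    Subgroup.centralizer (S : Set G) ≤ Subgroup.normalizer (S : Set G) := by
  intro k hk
  rw [Subgroup.mem_normalizer_iff]
  rw [Subgroup.mem_centralizer_iff] at hk
  intro s
  constructor
  · intro hs
    have := hk s hs
    rw [← this, mul_inv_cancel_right]; exact hs
  · intro hs
    have h2 := hk _ hs
    rw [inv_mul_cancel_right] at h2
    have h3 := mul_left_cancel h2
    rw [h3]; exact hs

theorem hs_exists {G V : Type} [Group G] [AddCommGroup V] [Module ℂ V] [FiniteDimensional ℂ V]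
    {T : G → Module.End ℂ V} (h : PR T) {N S : Subgroup G} (gs : GS G N S)
    (hI : Irr (fun x : N => T x)) (hNH : N ≤ Subgroup.normalizer (S : Set G)) :
    Nonempty (HS (fun x : Subgroup.normalizer (S : Set G) => T x)
      (S.subgroupOf (Subgroup.normalizer (S : Set G)))) := by
  set H := Subgroup.normalizer (S : Set G) with hH
  have := hI.1
  let T' : H → Module.End ℂ V := fun x => T x
  have h' : PR T' := h.sub H
  have hI' : Irr T' := hI.mono fun n => ⟨⟨n, hNH n.2⟩, Pro.refl _⟩
  have hnorm : (S.subgroupOf H).Normal := Subgroup.normal_in_normalizer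
  have hss := clifford_ss (N := S.subgroupOf H) h' hI'
  obtain ⟨U, hU⟩ := IsSemisimpleModule.exists_simple_submodule (alg T' (S.subgroupOf H)) V
  set c := isotypicComponent (alg T' (S.subgroupOf H)) V U with hc
  have hcb := bot_lt_isotypicComponent (R := alg T' (S.subgroupOf H)) U
  have hle : N ≤ stab h (c.restrictScalars ℂ) := by
    refine gs.hNle.trans (sup_le ?_ ?_)
    · intro s hs
      apply mem_stab
      intro w hw
      exact sub_inv (T := T') (N := S.subgroupOf H) c (n := ⟨s, Subgroup.le_normalizer hs⟩)
        (Subgroup.mem_subgroupOf.2 hs) hw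
    · intro k hk
      apply mem_stab
      intro w hw
      have hcomm := perfect_comm h S gs.hperf.ge k (fun s hs =>
        (Subgroup.mem_centralizer_iff.1 hk s hs).symm)
      have hfi := Submodule.IsFullyInvariant.isotypicComponent (alg T' (S.subgroupOf H)) V U
      exact hfi (toEndA (T := T') (N := S.subgroupOf H) (T k)
        (fun n hn => hcomm n (Subgroup.mem_subgroupOf.1 hn))) hw
  rcases hI.2 (c.restrictScalars ℂ) (fun i w hw => stab_inv h _ (hle i.2) w hw) with h0 | h0
  · rw [Submodule.restrictScalars_eq_bot_iff] at h0
    exact absurd h0 hcb.ne'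
  · rw [Submodule.restrictScalars_eq_top_iff] at h0
    exact homog h' hI' U hU (.of_isotypicComponent_eq_top h0)

theorem period_card {G X : Type} [Group G] [MulAction G X] [Finite X] (g : G) (b : X)
    (hb : ∀ x, ∃ y ∈ Subgroup.zpowers g, y • b = x) :
    Function.minimalPeriod (g • · : X → X) b = Nat.card X := by
  have : Fintype (MulAction.orbit (Subgroup.zpowers g) b) := Fintype.ofFinite _
  have h3 : MulAction.orbit (Subgroup.zpowers g) b = Set.univ := by
    rw [Set.eq_univ_iff_forall]
    intro x
    obtain ⟨y, hy, hx⟩ := hb x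
    exact ⟨⟨y, hy⟩, hx⟩
  rw [MulAction.minimalPeriod_eq_card, ← Nat.card_eq_fintype_card, h3, Nat.card_univ]

theorem idx_dvd {G : Type} [Group G] [Finite G] (N H : Subgroup G) [N.Normal] (hNH : N ≤ H)
    (g : G) (hsup : N ⊔ Subgroup.zpowers g = ⊤) (i : ℕ) : g ^ i ∈ H ↔ H.index ∣ i := by
  have h1 : Function.minimalPeriod (g • · : G ⧸ H → G ⧸ H) ((1 : G) : G ⧸ H) = H.index := by
    apply period_card
    intro x
    induction x using QuotientGroup.induction_on with
    | H x =>
      have hx : x ∈ N ⊔ Subgroup.zpowers g := hsup ▸ Subgroup.mem_top x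
      rw [sup_comm, Subgroup.mem_sup_of_normal_right] at hx
      obtain ⟨y, hy, n, hn, rfl⟩ := hx
      refine ⟨y, hy, ?_⟩
      show ((y * 1 : G) : G ⧸ H) = _
      rw [QuotientGroup.eq]
      simpa using hNH hn
  rw [← h1, ← MulAction.pow_smul_eq_iff_minimalPeriod_dvd]
  have h4 : g ^ i • ((1 : G) : G ⧸ H) = ((g ^ i * 1 : G) : G ⧸ H) := rfl
  rw [h4, mul_one, eq_comm, QuotientGroup.eq, inv_one, one_mul]

theorem nonnormal_case {G V : Type} [Group G] [Finite G] [AddCommGroup V] [Module ℂ V]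
    [FiniteDimensional ℂ V] {T : G → Module.End ℂ V} {n : ℕ} (hn : WC n) (h : PR T)
    (hc : Nat.card G + finrank ℂ V ≤ n) (hf : ∀ k, Pro (T k) 1 → k = 1)
    (g : G) (htr : LinearMap.trace ℂ V (T g) ≠ 0) {N S : Subgroup G} (gs : GS G N S)
    (hI : Irr (fun x : N => T x)) (hsup : N ⊔ Subgroup.zpowers g = ⊤)
    (hH : Subgroup.normalizer (S : Set G) ≠ ⊤) : orderOf g * finrank ℂ V ∣ Nat.card G := by
  have hNH : N ≤ Subgroup.normalizer (S : Set G) := by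
    intro x hx
    rw [Subgroup.mem_normalizer_iff]
    refine fun s => ⟨gs.hNS x hx s, fun hs => ?_⟩
    have := gs.hNS x⁻¹ (N.inv_mem hx) _ hs
    simpa [mul_assoc] using this
  obtain ⟨D⟩ := hs_exists h gs hI hNH
  have hnorm : (S.subgroupOf (Subgroup.normalizer (S : Set G))).Normal :=
    Subgroup.normal_in_normalizer
  have hCH := centralizer_le_norm S
  have hconj := gs.hconj
  have hSH : S ≤ Subgroup.normalizer (S : Set G) := Subgroup.le_normalizer
  generalize Subgroup.normalizer (S : Set G) = H at *
  have := hI.1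
  have hN := gs.hN
  have h' : PR (fun x : H => T x) := h.sub H
  set t := H.index with ht
  have ht0 : 0 < t := Nat.pos_of_ne_zero Subgroup.index_ne_zero_of_finite
  have hidx := idx_dvd N H hNH g hsup
  have hgt : g ^ t ∈ H := (hidx t).2 dvd_rfl
  have htrR := hs_trace h H S gs.hperf hSH hconj D g t ht0 hgt (fun i hi0 hit hi =>
    absurd (Nat.le_of_dvd hi0 ((hidx i).1 hi)) (not_le.2 hit)) htr
  have hntU := D.hr.1
  have hntW : Nontrivial D.W := D.ntW
  have hRp := D.prR h'
  have hQp := D.prQ h'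
  let K := scal D.R hRp
  have hKn : K.Normal := scal_normal _ _
  have hperf' : S.subgroupOf H ≤ ⁅S.subgroupOf H, S.subgroupOf H⁆ := by
    rw [← Subgroup.map_le_map_iff_of_injective H.subtype_injective, Subgroup.map_commutator,
      Subgroup.map_subgroupOf_eq_of_le hSH, gs.hperf]
  -- centralizing elements lie in K
  have hCK : ∀ k : H, (∀ s ∈ S, k.1 * s = s * k.1) → k ∈ K := by
    intro k hk
    have h1 := perfect_comm hRp _ hperf' k (fun s hs =>
      Subtype.ext (hk s.1 (Subgroup.mem_subgroupOf.1 hs)))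
    obtain ⟨c, hc⟩ := D.irrR.schur (D.R k) (fun s => h1 s.1 s.2)
    refine ⟨c, ?_, hc⟩
    rintro rfl
    rw [zero_smul] at hc
    have h2 := D.hR k
    rw [hc] at h2
    exact not_isUnit_zero h2
  have hKC : ∀ k ∈ K, ∀ s ∈ S, k.1 * s = s * k.1 := by
    intro k hk s hs
    let s' : H := ⟨s, hSH hs⟩
    have hs' : s' ∈ S.subgroupOf H := Subgroup.mem_subgroupOf.2 hs
    have h1 : k * s' * k⁻¹ * s'⁻¹ ∈ S.subgroupOf H :=
      mul_mem (hnorm.conj_mem _ hs' k) (inv_mem hs')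
    have h2 : k * s' * k⁻¹ * s'⁻¹ ∈ K := by
      have := mul_mem hk (hKn.conj_mem _ (inv_mem hk) s')
      simpa [mul_assoc] using this
    have h3 : Pro (D.R (k * s' * k⁻¹ * s'⁻¹)) 1 := h2
    have h4 := (D.pro_R ⟨_, h1⟩).1.symm.trans h3
    have h5 := D.j_r ⟨_, h1⟩
    obtain ⟨c, hc, h6⟩ := h4
    rw [h6, map_smul, map_one] at h5
    have h7 := hf _ ⟨c, hc, h5.symm⟩
    have h8 : k * s' = s' * k := by
      have h9 : k * s' * k⁻¹ * s'⁻¹ = 1 := Subtype.ext h7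
      rw [mul_inv_eq_one, mul_inv_eq_iff_eq_mul] at h9
      exact h9
    exact congrArg Subtype.val h8
  have hIR : Irr D.R := D.irrR.mono fun s => ⟨s.1, Pro.refl _⟩
  have hIQ : Irr (fun k : K => D.Q k) := by
    have h1 := D.irrQ (fun x : N => (⟨x, hNH x.2⟩ : H)) hI
    refine ⟨hntW, fun Y hY => h1.2 Y fun x w hw => ?_⟩
    have h2 : N ≤ (stab hQp Y).map H.subtype := by
      refine gs.hNle.trans (sup_le ?_ ?_)
      · intro s hs
        refine ⟨⟨s, hSH hs⟩, mem_stab _ _ fun w hw => ?_, rfl⟩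
        have h3 := (D.pro_R ⟨⟨s, hSH hs⟩, Subgroup.mem_subgroupOf.2 hs⟩).2
        exact h3.mem (by simpa using hw)
      · intro k hk
        have hk' := Subgroup.mem_centralizer_iff.1 hk
        refine ⟨⟨k, hCH hk⟩, mem_stab _ _ fun w hw => ?_, rfl⟩
        exact hY ⟨_, hCK ⟨k, hCH hk⟩ fun s hs => (hk' s hs).symm⟩ w hw
    obtain ⟨y, hy, hyx⟩ := h2 x.2
    have h3 : y = ⟨x, hNH x.2⟩ := Subtype.ext hyx
    show D.Q ⟨x, hNH x.2⟩ w ∈ Y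
    rw [← h3]
    exact stab_inv _ _ hy w hw
  obtain ⟨Sq, hSq, hISq, hSqR⟩ := hRp.quot hIR K (fun k hk => hk)
  have hdim : finrank ℂ V = finrank ℂ D.U * finrank ℂ D.W := D.finrank_eq
  have hU0 : 0 < finrank ℂ D.U := finrank_pos
  have hW0 : 0 < finrank ℂ D.W := finrank_pos
  have hUV : finrank ℂ D.U ≤ finrank ℂ V := hdim ▸ Nat.le_mul_of_pos_right _ hW0
  have hWV : finrank ℂ D.W ≤ finrank ℂ V := hdim ▸ Nat.le_mul_of_pos_left _ hU0
  have hcH := card_sub_lt H hH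
  have hcK : Nat.card H = Nat.card (H ⧸ K) * Nat.card K := Subgroup.card_eq_card_quotient_mul_card_subgroup K
  have hcK1 : Nat.card K ≤ Nat.card H := Subgroup.card_le_card_group K
  have hcK2 : Nat.card (H ⧸ K) ≤ Nat.card H := hcK ▸ Nat.le_mul_of_pos_right _ Nat.card_pos
  have d1 := hn (H ⧸ K) D.U Sq hSq hISq (by omega) (QuotientGroup.mk ⟨g ^ t, hgt⟩)
    ((hSqR _).symm.trace_ne htrR)
  have d2 := hn K D.W (fun k : K => D.Q k) (hQp.sub K) hIQ (by omega) 1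
    ((hQp.one).symm.trace_ne (by
      rw [LinearMap.trace_one]
      exact_mod_cast hW0.ne'))
  rw [orderOf_one, one_mul] at d2
  set o := orderOf (QuotientGroup.mk ⟨g ^ t, hgt⟩ : H ⧸ K) with ho
  have d3 : orderOf g ∣ t * o := by
    rw [orderOf_dvd_iff_pow_eq_one, pow_mul]
    have h1 : (⟨g ^ t, hgt⟩ : H) ^ o ∈ K := by
      rw [← QuotientGroup.eq_one_iff, QuotientGroup.mk_pow]
      exact pow_orderOf_eq_one _
    have h2 : ∀ s ∈ S, (g ^ t) ^ o * s = s * (g ^ t) ^ o := hKC _ h1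
    apply gs.hcen'
    intro z s hs
    have hz : z ∈ N ⊔ Subgroup.zpowers g := hsup ▸ Subgroup.mem_top z
    rw [sup_comm, Subgroup.mem_sup_of_normal_right] at hz
    obtain ⟨y, ⟨k, rfl⟩, m, hm, rfl⟩ := hz
    have h3 : Commute ((g ^ t) ^ o) (m * s * m⁻¹) := h2 _ (gs.hNS m hm s hs)
    have h4 : Commute ((g ^ t) ^ o) (g ^ k) :=
      (((Commute.refl g).pow_left t).pow_left o).zpow_right k
    have h5 := (h4.mul_right h3).mul_right h4.inv_right
    have h6 : g ^ k * m * s * (g ^ k * m)⁻¹ = g ^ k * (m * s * m⁻¹) * (g ^ k)⁻¹ := by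
      simp [mul_assoc]
    show _ * (g ^ k * m * s * (g ^ k * m)⁻¹) = (g ^ k * m * s * (g ^ k * m)⁻¹) * _
    rw [h6]
    exact h5
  have hG : Nat.card G = t * Nat.card H := (Subgroup.index_mul_card H).symm
  rw [hdim, hG, hcK]
  calc orderOf g * (finrank ℂ D.U * finrank ℂ D.W) ∣
        (t * o) * (finrank ℂ D.U * finrank ℂ D.W) := mul_dvd_mul_right d3 _
    _ = t * ((o * finrank ℂ D.U) * finrank ℂ D.W) := by ring
    _ ∣ _ := mul_dvd_mul_left _ (mul_dvd_mul d1 d2)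

end

section
open Module
open scoped commutatorElement

section StageB
variable {G H : Type} [Group G] [Group H] [Finite H]

theorem stageB (π : H →* G) (hπ : Function.Surjective π) (h : H) (L : Subgroup H) [hLn : L.Normal]
    (hsup : L ⊔ Subgroup.zpowers h = ⊤) (hLp : ⁅L, L⁆ = L) (hk : π.ker ≤ L)
    (hkc : π.ker ≤ Subgroup.center H) (N : Subgroup G) (hLN : L.map π = N) (hN0 : N ≠ ⊥)
    (hmin : ∀ S' ≤ N, (∀ n ∈ N, ∀ s ∈ S', n * s * n⁻¹ ∈ S') → S' = ⊥ ∨ S' = N)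
    (hcen : ∀ x, (∀ n ∈ N, x * n = n * x) → x = 1) :
    commutator H = L ∧ IsQuasisimple ↥(commutator H) ∧
    Subgroup.map (commutator H).subtype (Subgroup.center ↥(commutator H)) =
      Subgroup.center H ∧ Subgroup.center H = π.ker ∧
    orderOf (QuotientGroup.mk h : H ⧸ Subgroup.center H) = orderOf (π h) ∧
    (Subgroup.center H).index = Nat.card G := by
  have hcomm : commutator H = L := by
    apply le_antisymm
    · exact comm_mem_of_cyclic L h hsup ⊤
    · rw [← hLp]; exact Subgroup.commutator_mono le_top le_top
  -- elements commuting with L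
  have hLc : ∀ x : H, (∀ l ∈ L, x * l = l * x) → x ∈ π.ker := by
    intro x hx
    rw [MonoidHom.mem_ker]
    apply hcen
    intro n hn
    rw [← hLN] at hn
    obtain ⟨l, hl, rfl⟩ := hn
    rw [← map_mul, hx l hl, map_mul]
  have hZ : Subgroup.center H = π.ker := by
    apply le_antisymm _ hkc
    intro x hx
    exact hLc x fun l _ => (Subgroup.mem_center_iff.1 hx l).symm
  have hZL : ∀ x : L, x ∈ Subgroup.center L ↔ π x = 1 := by
    intro x
    constructor
    · intro hx
      exact hLc x fun l hl => (congrArg Subtype.val (Subgroup.mem_center_iff.1 hx ⟨l, hl⟩)).symm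
    · intro hx
      rw [Subgroup.mem_center_iff]
      intro l
      exact Subtype.ext (Subgroup.mem_center_iff.1 (hkc hx) l)
  refine ⟨hcomm, ?_, ?_, hZ, ?_, ?_⟩
  · rw [hcomm]
    refine ⟨?_, ?_⟩
    · apply Subgroup.map_injective L.subtype_injective
      rw [commutator_def, Subgroup.map_commutator, ← MonoidHom.range_eq_map, Subgroup.range_subtype,
        hLp]
    · have hNs : IsSimpleGroup N := by
        rw [Subgroup.isSimpleGroup_iff]
        refine ⟨hN0, fun S' hS' hn => hmin S' hS' fun n hn' s hs => ?_⟩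
        have := hn.conj_mem ⟨s, hS' hs⟩ (Subgroup.mem_subgroupOf.2 hs) ⟨n, hn'⟩
        exact Subgroup.mem_subgroupOf.1 this
      let f : L →* N := (π.comp L.subtype).codRestrict N (fun x => by
        rw [← hLN]; exact ⟨x, x.2, rfl⟩)
      have hf : Function.Surjective f := by
        rintro ⟨n, hn⟩
        have hn' := hn
        rw [← hLN] at hn'
        obtain ⟨l, hl, rfl⟩ := hn'
        exact ⟨⟨l, hl⟩, rfl⟩
      have hker : Subgroup.center L = f.ker := by
        ext x
        rw [hZL, MonoidHom.mem_ker]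
        exact ⟨fun hx => Subtype.ext hx, fun hx => congrArg Subtype.val hx⟩
      exact ((QuotientGroup.quotientMulEquivOfEq hker).trans
        (QuotientGroup.quotientKerEquivOfSurjective f hf)).isSimpleGroup
  · rw [hcomm, hZ]
    ext x
    constructor
    · rintro ⟨y, hy, rfl⟩
      exact (hZL y).1 hy
    · intro hx
      exact ⟨⟨x, hk hx⟩, (hZL _).2 hx, rfl⟩
  · rw [orderOf_eq_orderOf_iff]
    intro n
    rw [← QuotientGroup.mk_pow, QuotientGroup.eq_one_iff, hZ, MonoidHom.mem_ker, map_pow]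
  · rw [hZ, Subgroup.index_ker, MonoidHom.range_eq_top.2 hπ, Subgroup.card_top]
end StageB

theorem stageA {G Γ : Type} [Group G] [Finite G] [Group Γ] (π : Γ →* G)
    (hπ : Function.Surjective π) (κ : ℂˣ →* Γ) (hκ : Function.Injective κ)
    (hκπ : κ.range = π.ker) (hkc : π.ker ≤ Subgroup.center Γ) (g : G)
    (N : Subgroup G) [hN : N.Normal] (hN0 : N ≠ ⊥) (hp : ⁅N, N⁆ = N)
    (hsup : N ⊔ Subgroup.zpowers g = ⊤)
    (hmin : ∀ S' ≤ N, (∀ n ∈ N, ∀ s ∈ S', n * s * n⁻¹ ∈ S') → S' = ⊥ ∨ S' = N)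
    (hcen : ∀ x, (∀ n ∈ N, x * n = n * x) → x = 1) :
    ∃ (H : Subgroup Γ) (h : H), Finite H ∧ π h = g ∧ (∀ x, ∃ y ∈ H, π y = x) ∧
      IsQuasisimple ↥(commutator H) ∧
      Subgroup.map (commutator H).subtype (Subgroup.center ↥(commutator H)) =
        Subgroup.center H ∧ IsCyclic (Subgroup.center H) ∧
      commutator H ⊔ Subgroup.zpowers h = ⊤ ∧
      orderOf (QuotientGroup.mk h : H ⧸ Subgroup.center H) = orderOf g ∧
      (Subgroup.center H).index = Nat.card G := by
  have hNn : (N.comap π).Normal := inferInstance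
  set N' := N.comap π with hN'
  set L := ⁅N', N'⁆ with hL
  have hLn : L.Normal := inferInstance
  have hLN : L.map π = N := by
    rw [hL, Subgroup.map_commutator, hN', Subgroup.map_comap_eq_self_of_surjective hπ, hp]
  have hcz : ∀ z ∈ π.ker, ∀ x, x * z = z * x := fun z hz x => Subgroup.mem_center_iff.1 (hkc hz) x
  have hfin : Finite L := by
    have h1 : Finite (commutatorSet Γ) := by
      choose σ hσ using hπ
      apply Set.Finite.to_subtype
      apply (Set.finite_range (fun p : G × G => ⁅σ p.1, σ p.2⁆)).subset
      rintro _ ⟨x, y, rfl⟩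
      refine ⟨(π x, π y), ?_⟩
      have key : ∀ x, ∃ z ∈ π.ker, σ (π x) = x * z := fun x =>
        ⟨x⁻¹ * σ (π x), by rw [MonoidHom.mem_ker]; simp [hσ], by simp⟩
      obtain ⟨z, hz, hz'⟩ := key x
      obtain ⟨w, hw, hw'⟩ := key y
      simp only [hz', hw', commutatorElement_def]
      have e1 := hcz z hz
      have e2 := hcz w hw
      have e3 : ∀ a, a * z⁻¹ = z⁻¹ * a := hcz _ (inv_mem hz)
      calc x * z * (y * w) * (x * z)⁻¹ * (y * w)⁻¹
          = x * ((z * (y * w)) * z⁻¹) * x⁻¹ * (w⁻¹ * y⁻¹) := by group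
        _ = x * (y * w) * x⁻¹ * (w⁻¹ * y⁻¹) := by rw [← e1]; group
        _ = x * y * (w * x⁻¹) * w⁻¹ * y⁻¹ := by group
        _ = _ := by rw [← e2]; group
    have h2 : Finite (commutator Γ) := inferInstance
    have h3 : L ≤ commutator Γ := Subgroup.commutator_mono le_top le_top
    exact Finite.of_injective _ (Subgroup.inclusion_injective h3)
  have hdec : ∀ x ∈ N', ∃ l ∈ L, ∃ z ∈ π.ker, x = l * z := by
    intro x hx
    have hx' : π x ∈ L.map π := by rw [hLN]; exact hx
    obtain ⟨l, hl, hlx⟩ := hx'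
    exact ⟨l, hl, l⁻¹ * x, by rw [MonoidHom.mem_ker]; simp [hlx], by simp⟩
  have hLp : ⁅L, L⁆ = L := by
    apply le_antisymm
    · exact Subgroup.commutator_le_left L L
    · conv_lhs => rw [hL]
      rw [Subgroup.commutator_le]
      intro x hx y hy
      obtain ⟨l, hl, z, hz, rfl⟩ := hdec x hx
      obtain ⟨m, hm, w, hw, rfl⟩ := hdec y hy
      have e1 := hcz z hz
      have e2 := hcz w hw
      have : ⁅l * z, m * w⁆ = ⁅l, m⁆ := by
        rw [commutatorElement_def, commutatorElement_def]
        calc l * z * (m * w) * (l * z)⁻¹ * (m * w)⁻¹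
            = l * ((z * (m * w)) * z⁻¹) * l⁻¹ * (w⁻¹ * m⁻¹) := by group
          _ = l * (m * w) * l⁻¹ * (w⁻¹ * m⁻¹) := by rw [← e1]; group
          _ = l * m * (w * l⁻¹) * w⁻¹ * m⁻¹ := by group
          _ = _ := by rw [← e2]; group
      rw [this]
      exact Subgroup.commutator_mem_commutator hl hm
  -- choice of the lift
  set m := orderOf (QuotientGroup.mk g : G ⧸ N) with hm
  have hm0 : 0 < m := orderOf_pos _
  have hgm : ∀ k : ℤ, g ^ k ∈ N ↔ (m : ℤ) ∣ k := by
    intro k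
    rw [orderOf_dvd_iff_zpow_eq_one, ← QuotientGroup.mk_zpow, QuotientGroup.eq_one_iff]
  obtain ⟨h, hhg, hhm⟩ : ∃ h, π h = g ∧ h ^ m ∈ L := by
    obtain ⟨h0, hh0⟩ := hπ g
    have h1 : h0 ^ m ∈ N' := by
      show π (h0 ^ m) ∈ N
      rw [map_pow, hh0]
      have := (hgm m).2 dvd_rfl
      rwa [zpow_natCast] at this
    obtain ⟨l, hl, z, hz, hlz⟩ := hdec _ h1
    have hz' := hz
    rw [← hκπ] at hz'
    obtain ⟨c, rfl⟩ := hz'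
    obtain ⟨d, hd⟩ := IsAlgClosed.exists_pow_nat_eq ((c⁻¹ : ℂˣ) : ℂ) hm0
    have hd0 : d ≠ 0 := by
      rintro rfl
      rw [zero_pow hm0.ne'] at hd
      exact (c⁻¹).ne_zero hd.symm
    have hd' : (Units.mk0 d hd0) ^ m = c⁻¹ := Units.ext (by simpa using hd)
    have hw : κ (Units.mk0 d hd0) ∈ π.ker := hκπ ▸ ⟨_, rfl⟩
    refine ⟨h0 * κ (Units.mk0 d hd0), by rw [map_mul, hh0, MonoidHom.mem_ker.1 hw, mul_one], ?_⟩
    have hcm : Commute h0 (κ (Units.mk0 d hd0)) := hcz _ hw h0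
    rw [hcm.mul_pow, ← map_pow, hd', hlz, mul_assoc, ← map_mul, mul_inv_cancel, map_one, mul_one]
    exact hl
  let H := L ⊔ Subgroup.zpowers h
  have hhH : h ∈ H := (le_sup_right : Subgroup.zpowers h ≤ H) (Subgroup.mem_zpowers h)
  have hLH : L ≤ H := le_sup_left
  have hHd : ∀ x ∈ H, ∃ l ∈ L, ∃ k : ℤ, x = l * h ^ k := by
    intro x hx
    rw [Subgroup.mem_sup_of_normal_left] at hx
    obtain ⟨l, hl, _, ⟨k, rfl⟩, rfl⟩ := hx
    exact ⟨l, hl, k, rfl⟩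
  have hker : ∀ x ∈ H, π x = 1 → x ∈ L := by
    intro x hx hx1
    obtain ⟨l, hl, k, rfl⟩ := hHd x hx
    rw [map_mul, map_zpow, hhg, mul_eq_one_iff_eq_inv] at hx1
    have h1 : g ^ k ∈ N := by
      rw [← inv_mem_iff, ← hx1, ← hLN]; exact ⟨l, hl, rfl⟩
    obtain ⟨j, rfl⟩ := (hgm k).1 h1
    rw [zpow_mul, zpow_natCast]
    exact mul_mem hl (zpow_mem hhm j)
  have hHfin : Finite H := by
    have h1 : IsOfFinOrder (h ^ m) := by
      have h2 := isOfFinOrder_of_finite (⟨h ^ m, hhm⟩ : L)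
      exact L.subtype.isOfFinOrder h2
    have h2 : IsOfFinOrder h := (isOfFinOrder_pow.1 h1).resolve_right hm0.ne'
    have h3 : Finite (Subgroup.zpowers h) := h2.finite_zpowers
    apply Finite.of_surjective (fun p : L × Subgroup.zpowers h => (⟨p.1 * p.2,
      mul_mem (hLH p.1.2) ((le_sup_right : Subgroup.zpowers h ≤ H) p.2.2)⟩ : H))
    rintro ⟨x, hx⟩
    obtain ⟨l, hl, k, rfl⟩ := hHd x hx
    exact ⟨(⟨l, hl⟩, ⟨h ^ k, ⟨k, rfl⟩⟩), rfl⟩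
  have hHs : ∀ x, ∃ y ∈ H, π y = x := by
    intro x
    have h1 : H.map π = ⊤ := by
      rw [Subgroup.map_sup, hLN, MonoidHom.map_zpowers, hhg, hsup]
    have h2 : x ∈ H.map π := h1 ▸ Subgroup.mem_top x
    exact h2
  have hB := stageB (π.comp H.subtype) (fun x => by
      obtain ⟨y, hy, hyx⟩ := hHs x
      exact ⟨⟨y, hy⟩, hyx⟩) ⟨h, hhH⟩ (L.subgroupOf H) (hLn := inferInstance)
    (by
      apply Subgroup.map_injective H.subtype_injective
      rw [Subgroup.map_sup, Subgroup.map_subgroupOf_eq_of_le hLH, MonoidHom.map_zpowers,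
        ← MonoidHom.range_eq_map, Subgroup.range_subtype]
      rfl)
    (by
      apply Subgroup.map_injective H.subtype_injective
      rw [Subgroup.map_commutator, Subgroup.map_subgroupOf_eq_of_le hLH, hLp])
    (fun x hx => Subgroup.mem_subgroupOf.2 (hker x.1 x.2 hx))
    (fun x hx => Subgroup.mem_center_iff.2 fun y => Subtype.ext (hcz x.1 hx y.1))
    N (by rw [← Subgroup.map_map, Subgroup.map_subgroupOf_eq_of_le hLH, hLN]) hN0 hmin hcen
  obtain ⟨b1, b2, b3, b4, b5, b6⟩ := hB
  refine ⟨H, ⟨h, hhH⟩, hHfin, hhg, hHs, b2, b3, ?_, ?_, ?_, b6⟩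
  · let F : Subgroup.center H →* ℂˣ := (MonoidHom.ofInjective hκ).symm.toMonoidHom.comp
      ((H.subtype.comp (Subgroup.center H).subtype).codRestrict κ.range (fun x => by
        rw [hκπ]
        exact b4.le x.2))
    have hF : Function.Injective F := by
      intro x y hxy
      have h1 := (MonoidHom.ofInjective hκ).symm.injective hxy
      have h2 : (x.1.1 : Γ) = y.1.1 := congrArg (fun z : κ.range => (z : Γ)) h1
      exact Subtype.ext (Subtype.ext h2)
    exact isCyclic_of_injective_ringHom ((Units.coeHom ℂ).comp F) (Units.val_injective.comp hF)
  · rw [b1]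
    apply Subgroup.map_injective H.subtype_injective
    rw [Subgroup.map_sup, Subgroup.map_subgroupOf_eq_of_le hLH, MonoidHom.map_zpowers,
        ← MonoidHom.range_eq_map, Subgroup.range_subtype]
    rfl
  · rw [b5]
    show orderOf (π h) = _
    rw [hhg]

end

section
open Module

open CategoryTheory in
theorem simple_of_irr {H V : Type} [Group H] [Finite H] [AddCommGroup V] [Module ℂ V]
    [FiniteDimensional ℂ V] (ρ : Representation ℂ H V) (hI : Irr (fun x => ρ x)) :
    Simple (FDRep.of ρ) := by
  have : NeZero (Nat.card H : ℂ) := ⟨by exact_mod_cast Nat.card_pos.ne'⟩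
  rw [FDRep.simple_iff_end_is_rank_one]
  have hnt := hI.1
  have key : ∀ f g : FDRep.of ρ ⟶ FDRep.of ρ,
      (f.hom.hom.hom : V →ₗ[ℂ] V) = g.hom.hom.hom → f = g := by
    intro f g h
    apply Action.Hom.ext
    apply InducedCategory.hom_ext
    apply ModuleCat.hom_ext
    exact h
  refine (finrank_eq_one_iff_of_nonzero' (𝟙 (FDRep.of ρ)) ?_).2 ?_
  · intro h0
    obtain ⟨v, hv⟩ := exists_ne (0 : V)
    have h1 : (LinearMap.id : V →ₗ[ℂ] V) = 0 :=
      congrArg (fun f : FDRep.of ρ ⟶ FDRep.of ρ => (f.hom.hom.hom : V →ₗ[ℂ] V)) h0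
    exact hv (LinearMap.congr_fun h1 v)
  · intro f
    obtain ⟨c, hc⟩ := hI.schur (f.hom.hom.hom : V →ₗ[ℂ] V) (fun x => by
      have h1 := f.comm x
      exact congrArg (fun f : (FDRep.of ρ).V ⟶ (FDRep.of ρ).V => (f.hom.hom : V →ₗ[ℂ] V)) h1)
    refine ⟨c, key _ _ ?_⟩
    exact hc.symm

section E
variable {G V : Type} [Group G] [AddCommGroup V] [Module ℂ V] 

/-- The group of pairs lifting a projective representation. -/
def liftG (T : G → Module.End ℂ V) (h : PR T) : Subgroup (G × (Module.End ℂ V)ˣ) where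
  carrier := {p | Pro (p.2 : Module.End ℂ V) (T p.1)}
  one_mem' := h.one.symm
  mul_mem' {a b} ha hb := by
    have ha' : Pro (a.2 : Module.End ℂ V) (T a.1) := ha
    have hb' : Pro (b.2 : Module.End ℂ V) (T b.1) := hb
    show Pro ((a.2 * b.2 : (Module.End ℂ V)ˣ) : Module.End ℂ V) (T (a.1 * b.1))
    rw [Units.val_mul]
    exact (ha'.mul hb').trans (h.2 _ _).symm
  inv_mem' {a} ha := by
    have ha' : Pro (a.2 : Module.End ℂ V) (T a.1) := ha
    show Pro ((a.2⁻¹ : (Module.End ℂ V)ˣ) : Module.End ℂ V) (T a.1⁻¹)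
    have h1 := (Pro.refl ((a.2⁻¹ : (Module.End ℂ V)ˣ) : Module.End ℂ V)).mul
      (ha'.mul (Pro.refl (T a.1⁻¹)))
    have h2 := (Pro.refl ((a.2⁻¹ : (Module.End ℂ V)ˣ) : Module.End ℂ V)).mul (h.inv a.1)
    rw [Units.inv_mul_cancel_left] at h1
    rw [mul_one] at h2
    exact (h1.trans h2).symm

theorem mem_liftG {T : G → Module.End ℂ V} {h : PR T} {p : G × (Module.End ℂ V)ˣ} :
    p ∈ liftG T h ↔ Pro (p.2 : Module.End ℂ V) (T p.1) := Iff.rfl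

/-- Scalars in the lift. -/
noncomputable def liftK (T : G → Module.End ℂ V) (h : PR T) : ℂˣ →* liftG T h :=
  ((MonoidHom.inr G (Module.End ℂ V)ˣ).comp
    (Units.map (algebraMap ℂ (Module.End ℂ V)).toMonoidHom)).codRestrict _ (fun c => by
      rw [mem_liftG]
      refine Pro.trans ⟨(c : ℂ), c.ne_zero, ?_⟩ h.one.symm
      exact Algebra.algebraMap_eq_smul_one _)

theorem pro_one_of {T : G → Module.End ℂ V} (h : PR T)
    (hf : ∀ k, Pro (T k) 1 → k = 1) {x y : G} (hxy : Pro (T x) (T y)) : x = y := by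
  have h1 := hf (x * y⁻¹) ((h.2 _ _).trans ((hxy.mul (Pro.refl _)).trans (h.inv y)))
  exact mul_inv_eq_one.1 h1

theorem liftK_val (T : G → Module.End ℂ V) (h : PR T) (c : ℂˣ) :
    ((liftK T h c).1.2 : Module.End ℂ V) = (c : ℂ) • 1 := Algebra.algebraMap_eq_smul_one _

theorem simple_case [Finite G] [FiniteDimensional ℂ V] {T : G → Module.End ℂ V}
    (hyp : ∀ (H : Type) [Group H] [Finite H] (h : H) (V : FDRep ℂ H),
      SatisfiesStar H h V → V.character h ≠ 0 →
      orderOf (QuotientGroup.mk h : H ⧸ Subgroup.center H) * Module.finrank ℂ V ∣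
        (Subgroup.center H).index)
    (h : PR T) (hf : ∀ k, Pro (T k) 1 → k = 1) (g : G)
    (htr : LinearMap.trace ℂ V (T g) ≠ 0) {N S : Subgroup G} (gs : GS G N S)
    (hI : Irr (fun x : N => T x)) (hsup : N ⊔ Subgroup.zpowers g = ⊤)
    (hH : Subgroup.normalizer (S : Set G) = ⊤) :
    orderOf g * finrank ℂ V ∣ Nat.card G := by
  have hnt := hI.1
  have hSn : S.Normal := Subgroup.normalizer_eq_top_iff.1 hH
  have hSN : S = N := (gs.hNmin S hSn gs.hSN).resolve_left gs.hS0
  subst hSN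
  let π : liftG T h →* G := (MonoidHom.fst _ _).comp (liftG T h).subtype
  have hπ : Function.Surjective π := by
    intro x
    obtain ⟨u, hu⟩ := h.1 x
    exact ⟨⟨(x, u), by rw [mem_liftG]; simp only [hu]; exact Pro.refl _⟩, rfl⟩
  have hκ : Function.Injective (liftK T h) := by
    intro c d hcd
    have h1 := liftK_val T h c
    rw [hcd, liftK_val] at h1
    exact Units.ext (smul_left_injective ℂ (one_ne_zero (α := Module.End ℂ V)) h1).symm
  have hker : ∀ x : liftG T h, x ∈ π.ker → ∃ c : ℂ, c ≠ 0 ∧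
      (x.1.2 : Module.End ℂ V) = c • 1 := by
    intro x hx
    have hx1 : x.1.1 = 1 := hx
    have h1 := mem_liftG.1 x.2
    rw [hx1] at h1
    exact h1.trans h.one
  have hκπ : (liftK T h).range = π.ker := by
    apply le_antisymm
    · rintro _ ⟨c, rfl⟩
      rfl
    · intro x hx
      obtain ⟨c, hc, hxc⟩ := hker x hx
      refine ⟨Units.mk0 c hc, Subtype.ext (Prod.ext ?_ (Units.ext ?_))⟩
      · exact (show x.1.1 = 1 from hx).symm
      · rw [liftK_val, hxc]; rfl
  have hkc : π.ker ≤ Subgroup.center (liftG T h) := by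
    intro x hx
    obtain ⟨c, hc, hxc⟩ := hker x hx
    have hx1 : x.1.1 = 1 := hx
    rw [Subgroup.mem_center_iff]
    intro y
    refine Subtype.ext (Prod.ext ?_ (Units.ext ?_))
    · show y.1.1 * x.1.1 = x.1.1 * y.1.1
      rw [hx1, mul_one, one_mul]
    · show (y.1.2 : Module.End ℂ V) * x.1.2 = x.1.2 * y.1.2
      rw [hxc, mul_smul_comm, smul_mul_assoc, one_mul, mul_one]
  obtain ⟨H, x, hfin, hx, hsurj, c1, c2, c3, c4, c5, c6⟩ :=
    stageA π hπ (liftK T h) hκ hκπ hkc g S gs.hN0 gs.hperf hsup gs.hmin gs.hcen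
  let ρ : Representation ℂ H V := (Units.coeHom _).comp
    ((MonoidHom.snd _ _).comp ((liftG T h).subtype.comp H.subtype))
  have hρ : ∀ y : H, Pro (ρ y) (T y.1.1.1) := fun y => mem_liftG.1 y.1.2
  have hρi : Function.Injective ρ := by
    intro y z hyz
    have h1 : Pro (T y.1.1.1) (T z.1.1.1) := by
      have := (hρ y).symm
      rw [hyz] at this
      exact this.trans (hρ z)
    exact Subtype.ext (Subtype.ext (Prod.ext (pro_one_of h hf h1) (Units.ext hyz)))
  have hρI : Irr (fun y => ρ y) := by
    refine hI.mono fun n => ?_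
    obtain ⟨y, hy, hyn⟩ := hsurj n
    refine ⟨⟨y, hy⟩, ?_⟩
    have h1 := (hρ ⟨y, hy⟩).symm
    have h2 : y.1.1 = n := hyn
    simp only [h2] at h1
    exact h1
  have hres := hyp H x (FDRep.of ρ) ⟨simple_of_irr ρ hρI, hρi, c1, c2, c3, c4⟩ (by
    have h1 := (hρ x).symm
    have h2 : x.1.1.1 = g := hx
    rw [h2] at h1
    exact h1.trace_ne htr)
  rw [c5, c6] at hres
  exact hres
end E

end

section
open Module

theorem wc_all
    (hyp : ∀ (H : Type) [Group H] [Finite H] (h : H) (V : FDRep ℂ H),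
      SatisfiesStar H h V → V.character h ≠ 0 →
      orderOf (QuotientGroup.mk h : H ⧸ Subgroup.center H) * Module.finrank ℂ V ∣
        (Subgroup.center H).index) (n : ℕ) : WC n := by
  induction n with
  | zero => intro G V _ _ _ _ _ T _ _ hc; omega
  | succ n hn =>
    intro G V _ _ _ _ _ T h hI hc g htr
    have hc' : Nat.card G + finrank ℂ V ≤ n := by omega
    by_cases hK : scal T h ≠ ⊥
    · exact red_faithful hn h hI hc' g htr hK
    push Not at hK
    have hf : ∀ k, Pro (T k) 1 → k = 1 := by
      intro k hk
      have h1 : k ∈ scal T h := hk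
      rw [hK] at h1
      exact Subgroup.mem_bot.1 h1
    by_contra hcon
    have hall : ∀ M : Subgroup G, M.Normal → M ≠ ⊥ →
        M ⊔ Subgroup.zpowers g = ⊤ ∧ Irr (fun x : M => T x) := by
      intro M hM hM0
      exact (red_norm hn h hI hc' g htr M hM0).resolve_left hcon
    rcases subsingleton_or_nontrivial G with hG | hG
    · apply hcon
      exact abel_case h g ⊤ hf (by simp)
        (hI.mono fun i => ⟨⟨i, Subgroup.mem_top i⟩, Pro.refl _⟩)
        (fun a b => Subtype.ext (Subsingleton.elim _ _))
    obtain ⟨N, S, gs⟩ := exists_GS g (fun M hM hM0 => (hall M hM hM0).1) (fun M hM hM0 hab => by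
      apply hcon
      exact abel_case h g M hf (hall M hM hM0).1 (hall M hM hM0).2
        (fun a b => Subtype.ext (hab a.1 a.2 b.1 b.2)))
    obtain ⟨h1, h2⟩ := hall N gs.hN gs.hN0
    apply hcon
    by_cases hH : Subgroup.normalizer (S : Set G) = ⊤
    · exact simple_case hyp h hf g htr gs h2 h1 hH
    · exact nonnormal_case hn h hc' hf g htr gs h2 h1 hH

open CategoryTheory in
theorem irr_of_simple {G : Type} [Group G] (V : FDRep ℂ G) (hV : Simple V) :
    Irr (fun x => V.ρ x) := by
  constructor
  · by_contra hnt
    rw [not_nontrivial_iff_subsingleton] at hnt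
    apply id_nonzero V
    apply Action.Hom.ext
    apply InducedCategory.hom_ext
    apply ModuleCat.hom_ext
    apply LinearMap.ext
    intro v
    exact Subsingleton.elim (α := (V : Type)) _ _
  · intro W hW
    by_cases hW0 : W = ⊥
    · exact Or.inl hW0
    right
    let σ : Representation ℂ G W :=
      { toFun := fun x => (V.ρ x).restrict (hW x)
        map_one' := by ext w; simp
        map_mul' := fun x y => by ext w; simp }
    let f : FDRep.of σ ⟶ V := ⟨InducedCategory.homMk (ModuleCat.ofHom W.subtype), fun x => by
      apply InducedCategory.hom_ext
      apply ModuleCat.hom_ext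
      apply LinearMap.ext
      intro w
      rfl⟩
    have hfi : ∀ w : W, (f.hom.hom.hom : W →ₗ[ℂ] V) w = w := fun w => rfl
    have hmono : Mono f := by
      constructor
      intro Z a b hab
      apply Action.Hom.ext
      apply InducedCategory.hom_ext
      apply ModuleCat.hom_ext
      apply LinearMap.ext
      intro z
      apply Subtype.ext
      exact congrArg (fun q : Z ⟶ V => (q.hom.hom.hom : Z →ₗ[ℂ] V) z) hab
    have hf0 : f ≠ 0 := by
      intro h0
      apply hW0
      rw [eq_bot_iff]
      intro w hw
      exact congrArg (fun q : FDRep.of σ ⟶ V => (q.hom.hom.hom : W →ₗ[ℂ] V) ⟨w, hw⟩) h0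
    have hiso : IsIso f := isIso_of_mono_of_nonzero hf0
    rw [eq_top_iff]
    intro v _
    have h1 := congrArg (fun q : V ⟶ V => (q.hom.hom.hom : V →ₗ[ℂ] V) v) (IsIso.inv_hom_id f)
    have h2 : (((inv f).hom.hom.hom : V →ₗ[ℂ] W) v : V) = v := h1
    rw [← h2]
    exact Subtype.mem _

end

/-- **Theorem B.** Suppose that for every triple `(H, h, χ)` satisfying
condition `(*)` with `χ(h) ≠ 0`, the order of `hZ(H)` in `H/Z(H)` times `χ(1)` divides
`|H : Z(H)|`. Then Wilde's conjecture holds: for every finite group `G`, every irreducible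
complex character `χ` of `G` and every `g ∈ G` with `χ(g) ≠ 0`, the order of `g` times
`χ(1)` divides `|G|`. -/
theorem wilde_of_nearly_simple
    (hyp : ∀ (H : Type) [Group H] [Finite H] (h : H) (V : FDRep ℂ H),
      SatisfiesStar H h V → V.character h ≠ 0 →
      orderOf (QuotientGroup.mk h : H ⧸ Subgroup.center H) * Module.finrank ℂ V ∣
        (Subgroup.center H).index)
    (G : Type) [Group G] [Finite G] (V : FDRep ℂ G) (hV : CategoryTheory.Simple V)
    (g : G) (hg : V.character g ≠ 0) :
    orderOf g * Module.finrank ℂ V ∣ Nat.card G := by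
  refine wc_all hyp _ G V (fun x => V.ρ x) ⟨fun x => ?_, fun x y => ?_⟩ (irr_of_simple V hV)
    (Nat.lt_succ_self _) g hg
  · exact (Group.isUnit x).map V.ρ
  · show Pro (V.ρ (x * y)) (V.ρ x * V.ρ y)
    rw [map_mul]
    exact Pro.refl _
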